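/- (Key Lemma.) Assume Case 3 and let C be the constant in the normalization 1 ≤ u_i(x,t) − v(x) ≤ C. Define F(r) := Cr for r ≥ 0 and F(r) := r/C for r < 0. (i) If (A8)⁺ holds, then for every η ∈ (0,η₀] there exists s_η > 0 such that (α_η⁺, β_η⁺) is a viscosity supersolution of the system max{α' + (ψ_η/C)(α − 1) + F(α − β), α − 1} = 0, max{β' + (ψ_η/C)(β − 1) + F(β − α), β − 1} = 0 in (s_η, ∞); that is, whenever φ ∈ C¹ and α_η⁺ − φ has a local minimum at σ > s_η, then max{φ'(σ) + (ψ_η/C)(α_η⁺(σ) − 1) + F(α_η⁺(σ) − β_η⁺(σ)), α_η⁺(σ) − 1} ≥ 0, and symmetrically for β_η⁺. (ii) If (A8)⁻ holds, then for every η ∈ (0,η₀] there exists s_η > 0 such that (α_η⁻, β_η⁻) is a viscosity subsolution of the system min{α' + (ψ_η/C)·(α − 1)/α + F(α − β), α − 1} = 0, min{β' + (ψ_η/C)·(β − 1)/β + F(β − α), β − 1} = 0 in (s_η, ∞); that is, whenever φ ∈ C¹ and α_η⁻ − φ has a local maximum at σ > s_η, then min{φ'(σ) + (ψ_η/C)·(α_η⁻(σ)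 − 1)/α_η⁻(σ) + F(α_η⁻(σ) − β_η⁻(σ)), α_η⁻(σ) − 1} ≤ 0, and symmetrically for β_η⁻. -/

import Mathlib

open MeasureTheory Filter Topology Set

noncomputable section

/-- Euclidean space `ℝ^n`; the torus `𝕋^n` is modelled by `ℤ^n`-periodic functions on it. -/
abbrev En (n : ℕ) : Type := EuclideanSpace ℝ (Fin n)

/-- The integer vector `k ∈ ℤ^n` viewed as an element of `ℝ^n`. -/
def intVec (n : ℕ) (k : Fin n → ℤ) : En n := WithLp.toLp 2 (fun i => (k i : ℝ))

/-- A `ℤ^n`-periodic function on `ℝ^n`, i.e. a function on the torus `𝕋^n`. -/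
def ZPeriodic {n : ℕ} (f : En n → ℝ) : Prop :=
  ∀ (x : En n) (k : Fin n → ℤ), f (x + intVec n k) = f x

/-- A Hamiltonian `H : 𝕋^n × ℝ^n → ℝ` (periodic in the first variable). -/
def ZPeriodicH {n : ℕ} (H : En n → En n → ℝ) : Prop :=
  ∀ (x : En n) (k : Fin n → ℤ) (p : En n), H (x + intVec n k) p = H x p

/-- A function on `𝕋^n × ℝ` (space-time, periodic in space). -/
def ZPeriodicST {n : ℕ} (u : En n × ℝ → ℝ) : Prop :=
  ∀ (x : En n) (k : Fin n → ℤ) (t : ℝ), u (x + intVec n k, t) = u (x, t)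

/-- (A1): coercivity, `lim_{r→∞} inf{H(x,p) : x ∈ 𝕋^n, |p| ≥ r} = ∞`. -/
def Coercive {n : ℕ} (H : En n → En n → ℝ) : Prop :=
  ∀ M : ℝ, ∃ r : ℝ, ∀ (x p : En n), r ≤ ‖p‖ → M ≤ H x p

/-- Coercivity for an `x`-independent Hamiltonian. -/
def CoerciveP {n : ℕ} (H : En n → ℝ) : Prop :=
  ∀ M : ℝ, ∃ r : ℝ, ∀ p : En n, r ≤ ‖p‖ → M ≤ H p

/-- Lipschitz continuity (membership in `W^{1,∞}`). -/
def IsLip {n : ℕ} (f : En n → ℝ) : Prop := ∃ K : NNReal, LipschitzWith K f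

/-- Viscosity subsolution inequality for one stationary equation
`H(x, Dw) + c (w - wo) ≤ ρ(x)` of a weakly coupled system. -/
def StatSubIneq {n : ℕ} (H : En n → En n → ℝ) (c : ℝ) (w wo : En n → ℝ) (ρ : En n → ℝ) : Prop :=
  ∀ φ : En n → ℝ, ContDiff ℝ 1 φ →
    ∀ x₀ : En n, IsLocalMax (fun x => w x - φ x) x₀ →
      H x₀ (gradient φ x₀) + c * (w x₀ - wo x₀) ≤ ρ x₀

/-- Viscosity supersolution inequality for one stationary equation. -/
def StatSuperIneq {n : ℕ} (H : En n → En n → ℝ) (c : ℝ) (w wo : En n → ℝ) (ρ : En n → ℝ) : Prop :=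
  ∀ φ : En n → ℝ, ContDiff ℝ 1 φ →
    ∀ x₀ : En n, IsLocalMin (fun x => w x - φ x) x₀ →
      ρ x₀ ≤ H x₀ (gradient φ x₀) + c * (w x₀ - wo x₀)

/-- Viscosity subsolution of the stationary system
`Hᵢ(x, Dwᵢ) + cᵢ (wᵢ - wⱼ) = ρᵢ(x)`, `i = 1,2`. -/
def CellSub {n : ℕ} (H₁ H₂ : En n → En n → ℝ) (c₁ c₂ : ℝ) (w₁ w₂ : En n → ℝ)
    (ρ₁ ρ₂ : En n → ℝ) : Prop :=
  StatSubIneq H₁ c₁ w₁ w₂ ρ₁ ∧ StatSubIneq H₂ c₂ w₂ w₁ ρ₂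

/-- Viscosity supersolution of the stationary system. -/
def CellSuper {n : ℕ} (H₁ H₂ : En n → En n → ℝ) (c₁ c₂ : ℝ) (w₁ w₂ : En n → ℝ)
    (ρ₁ ρ₂ : En n → ℝ) : Prop :=
  StatSuperIneq H₁ c₁ w₁ w₂ ρ₁ ∧ StatSuperIneq H₂ c₂ w₂ w₁ ρ₂

/-- Viscosity solution (continuous, sub- and supersolution) of the stationary system. -/
def CellSolution {n : ℕ} (H₁ H₂ : En n → En n → ℝ) (c₁ c₂ : ℝ) (v₁ v₂ : En n → ℝ)
    (ρ₁ ρ₂ : En n → ℝ) : Prop :=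
  Continuous v₁ ∧ Continuous v₂ ∧
    CellSub H₁ H₂ c₁ c₂ v₁ v₂ ρ₁ ρ₂ ∧ CellSuper H₁ H₂ c₁ c₂ v₁ v₂ ρ₁ ρ₂

/-- Subsolution of the ergodic problem (E) with constant `c` (coupling constants 1). -/
def ErgSub {n : ℕ} (H₁ H₂ : En n → En n → ℝ) (v₁ v₂ : En n → ℝ) (c : ℝ) : Prop :=
  CellSub H₁ H₂ 1 1 v₁ v₂ (fun _ => c) (fun _ => c)

/-- Supersolution of the ergodic problem (E). -/
def ErgSuper {n : ℕ} (H₁ H₂ : En n → En n → ℝ) (v₁ v₂ : En n → ℝ) (c : ℝ) : Prop :=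
  CellSuper H₁ H₂ 1 1 v₁ v₂ (fun _ => c) (fun _ => c)

/-- Viscosity solution of the ergodic problem (E):
`H₁(x,Dv₁) + v₁ - v₂ = c`, `H₂(x,Dv₂) + v₂ - v₁ = c` on `𝕋^n`. -/
def ErgSolution {n : ℕ} (H₁ H₂ : En n → En n → ℝ) (v₁ v₂ : En n → ℝ) (c : ℝ) : Prop :=
  CellSolution H₁ H₂ 1 1 v₁ v₂ (fun _ => c) (fun _ => c)

/-- Viscosity subsolution inequality for one evolution equation
`∂ₜ u + H(x, Du) + u - uo ≤ 0` in `𝕋^n × (0,∞)`. -/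
def EvolSubIneq {n : ℕ} (H : En n → En n → ℝ) (u uo : En n × ℝ → ℝ) : Prop :=
  ∀ φ : En n × ℝ → ℝ, ContDiff ℝ 1 φ →
    ∀ (x₀ : En n) (t₀ : ℝ), 0 < t₀ →
      IsLocalMax (fun q => u q - φ q) (x₀, t₀) →
      fderiv ℝ φ (x₀, t₀) (0, 1) + H x₀ (gradient (fun y => φ (y, t₀)) x₀)
        + u (x₀, t₀) - uo (x₀, t₀) ≤ 0

/-- Viscosity supersolution inequality for one evolution equation. -/
def EvolSuperIneq {n : ℕ} (H : En n → En n → ℝ) (u uo : En n × ℝ → ℝ) : Prop :=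
  ∀ φ : En n × ℝ → ℝ, ContDiff ℝ 1 φ →
    ∀ (x₀ : En n) (t₀ : ℝ), 0 < t₀ →
      IsLocalMin (fun q => u q - φ q) (x₀, t₀) →
      0 ≤ fderiv ℝ φ (x₀, t₀) (0, 1) + H x₀ (gradient (fun y => φ (y, t₀)) x₀)
        + u (x₀, t₀) - uo (x₀, t₀)

/-- Viscosity subsolution of system (C) (with coupling constants `c₁ = c₂ = 1`). -/
def SysSub {n : ℕ} (H₁ H₂ : En n → En n → ℝ) (u₁ u₂ : En n × ℝ → ℝ) : Prop :=
  EvolSubIneq H₁ u₁ u₂ ∧ EvolSubIneq H₂ u₂ u₁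

/-- Viscosity supersolution of system (C). -/
def SysSuper {n : ℕ} (H₁ H₂ : En n → En n → ℝ) (u₁ u₂ : En n × ℝ → ℝ) : Prop :=
  EvolSuperIneq H₁ u₁ u₂ ∧ EvolSuperIneq H₂ u₂ u₁

/-- Viscosity solution of the Cauchy problem (C): continuous on `𝕋^n × [0,∞)`,
sub- and supersolution, attaining the initial data. -/
def SysSolution {n : ℕ} (H₁ H₂ : En n → En n → ℝ) (u₀₁ u₀₂ : En n → ℝ)
    (u₁ u₂ : En n × ℝ → ℝ) : Prop :=
  ContinuousOn u₁ {q : En n × ℝ | 0 ≤ q.2} ∧ ContinuousOn u₂ {q : En n × ℝ | 0 ≤ q.2} ∧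
    SysSub H₁ H₂ u₁ u₂ ∧ SysSuper H₁ H₂ u₁ u₂ ∧
    (∀ x, u₁ (x, 0) = u₀₁ x) ∧ (∀ x, u₂ (x, 0) = u₀₂ x)

/-- Viscosity subsolution of the single stationary equation `H(x,Dv) ≤ c` on `𝕋^n`. -/
def SingleSub {n : ℕ} (H : En n → En n → ℝ) (v : En n → ℝ) (c : ℝ) : Prop :=
  ∀ φ : En n → ℝ, ContDiff ℝ 1 φ →
    ∀ x₀ : En n, IsLocalMax (fun x => v x - φ x) x₀ → H x₀ (gradient φ x₀) ≤ c

/-- Viscosity supersolution of the single stationary equation `H(x,Dv) ≥ c` on `𝕋^n`. -/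
def SingleSuper {n : ℕ} (H : En n → En n → ℝ) (v : En n → ℝ) (c : ℝ) : Prop :=
  ∀ φ : En n → ℝ, ContDiff ℝ 1 φ →
    ∀ x₀ : En n, IsLocalMin (fun x => v x - φ x) x₀ → c ≤ H x₀ (gradient φ x₀)

/-- Viscosity solution of the single stationary equation `H(x,Dv) = c` on `𝕋^n`. -/
def SingleSolution {n : ℕ} (H : En n → En n → ℝ) (v : En n → ℝ) (c : ℝ) : Prop :=
  Continuous v ∧ SingleSub H v c ∧ SingleSuper H v c

/-- Uniform convergence `u(·,t) → v` on `𝕋^n` as `t → ∞`. -/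
def UnifTendsTo {n : ℕ} (u : En n × ℝ → ℝ) (v : En n → ℝ) : Prop :=
  ∀ ε : ℝ, 0 < ε → ∃ T : ℝ, ∀ t : ℝ, T ≤ t → ∀ x : En n, |u (x, t) - v x| ≤ ε

/-- (A8)⁺ at level `η` with constant `ψ`. -/
def A8plusAt {n : ℕ} (H : En n → En n → ℝ) (η ψ : ℝ) : Prop :=
  ∀ (x p q : En n), η ≤ H x (p + q) → H x q ≤ 0 →
    ∀ μ : ℝ, 0 < μ → μ ≤ 1 → H x (p + q) + ψ * (1 - μ) ≤ μ * H x (μ⁻¹ • p + q)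

/-- (A8)⁻ at level `η` with constant `ψ`. -/
def A8minusAt {n : ℕ} (H : En n → En n → ℝ) (η ψ : ℝ) : Prop :=
  ∀ (x p q : En n), H x (p + q) ≤ -η → 0 ≤ H x q →
    ∀ μ : ℝ, 1 ≤ μ → μ * H x (μ⁻¹ • p + q) ≤ H x (p + q) - ψ * (μ - 1) / μ

/-- (A8)⁺ with threshold `η₀`. -/
def A8plus {n : ℕ} (H : En n → En n → ℝ) (η₀ : ℝ) : Prop :=
  ∀ η : ℝ, 0 < η → η ≤ η₀ → ∃ ψ : ℝ, 0 < ψ ∧ A8plusAt H η ψ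

/-- (A8)⁻ with threshold `η₀`. -/
def A8minus {n : ℕ} (H : En n → En n → ℝ) (η₀ : ℝ) : Prop :=
  ∀ η : ℝ, 0 < η → η ≤ η₀ → ∃ ψ : ℝ, 0 < ψ ∧ A8minusAt H η ψ

/-- The function `F` of the Key Lemma: `F(r) = C r` for `r ≥ 0`, `F(r) = r / C` for `r < 0`. -/
def Fc (C r : ℝ) : ℝ := if 0 ≤ r then C * r else r / C

/-- `α_η⁺(s)` (resp. `β_η⁺(s)` with `u = u₂`):
`min_{x ∈ 𝕋^n, t ≥ s} (u(x,t) - v(x) + η (t-s)) / (u(x,s) - v(x))`. -/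
def alphaPlus {n : ℕ} (u : En n × ℝ → ℝ) (v : En n → ℝ) (η s : ℝ) : ℝ :=
  sInf {r : ℝ | ∃ (x : En n) (t : ℝ), s ≤ t ∧
    r = (u (x, t) - v x + η * (t - s)) / (u (x, s) - v x)}

/-- `α_η⁻(s)` (resp. `β_η⁻(s)` with `u = u₂`):
`max_{x ∈ 𝕋^n, t ≥ s} (u(x,t) - v(x) - η (t-s)) / (u(x,s) - v(x))`. -/
def alphaMinus {n : ℕ} (u : En n × ℝ → ℝ) (v : En n → ℝ) (η s : ℝ) : ℝ :=
  sSup {r : ℝ | ∃ (x : En n) (t : ℝ), s ≤ t ∧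
    r = (u (x, t) - v x - η * (t - s)) / (u (x, s) - v x)}

/-- (A9)⁺. -/
def A9plus {n : ℕ} (H : En n → En n → ℝ) : Prop :=
  ∃ K : Set (En n), IsClosed K ∧ (∀ x ∈ K, ∀ k : Fin n → ℤ, x + intVec n k ∈ K) ∧
    (∀ x ∈ K, (∀ p : En n, 0 ≤ H x p) ∧ ∃ p : En n, H x p = 0) ∧
    (∀ ε : ℝ, 0 < ε → ∃ η₀ : ℝ, 0 < η₀ ∧ ∃ ψ : ℝ → ℝ, (∀ r : ℝ, 0 < r → 0 < ψ r) ∧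
      ∀ η : ℝ, 0 < η → η ≤ η₀ → ∀ (x p q : En n), ε ≤ Metric.infDist x K →
        η ≤ H x (p + q) → H x q ≤ 0 →
        ∀ μ : ℝ, 0 < μ → μ ≤ 1 → H x (p + q) + ψ η * (1 - μ) ≤ μ * H x (μ⁻¹ • p + q))

/-- (A9)⁻. -/
def A9minus {n : ℕ} (H : En n → En n → ℝ) : Prop :=
  ∃ K : Set (En n), IsClosed K ∧ (∀ x ∈ K, ∀ k : Fin n → ℤ, x + intVec n k ∈ K) ∧
    (∀ x ∈ K, (∀ p : En n, 0 ≤ H x p) ∧ ∃ p : En n, H x p = 0) ∧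
    (∀ ε : ℝ, 0 < ε → ∃ η₀ : ℝ, 0 < η₀ ∧ ∃ ψ : ℝ → ℝ, (∀ r : ℝ, 0 < r → 0 < ψ r) ∧
      ∀ η : ℝ, 0 < η → η ≤ η₀ → ∀ (x p q : En n), ε ≤ Metric.infDist x K →
        H x (p + q) ≤ -η → 0 ≤ H x q →
        ∀ μ : ℝ, 1 ≤ μ → μ * H x (μ⁻¹ • p + q) ≤ H x (p + q) - ψ η * (μ - 1) / μ)

/-- (A6): uniform convexity of an `x`-independent Hamiltonian. -/
def UnifConvex {n : ℕ} (H : En n → ℝ) : Prop :=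
  ∃ α : ℝ, 0 < α ∧ ∀ᵐ q : En n ∂volume, DifferentiableAt ℝ H q ∧
    ∀ p : En n, H q + fderiv ℝ H q (p - q) + α * ‖p - q‖ ^ 2 ≤ H p

end

/-!
For all large times `α_η^± = β_η^± = 1`, so the second entry of each `max` or `min` vanishes.

Comparison gives `|u₁ - u₂| ≤ C e^{-2t}`, hence for large times the coupling is an arbitrarily
small error and each `uᵢ` nearly solves the scalar equation.

Under (A8)⁺, `u(t)` is compared with `μ(t,r) u(r) + (1 - μ(t,r)) v` for `r ≤ t`, by doubling the
space and time variables, with `μ = e^{-k(r)(t - r)}` and `k' = -(ψ/C) k`. The derivatives of `μ`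
produce the term `(ψ/C) k(r) (t - r) μ (u(r) - v) ≤ ψ (1 - μ)`, which is the convexity defect that
(A8)⁺ provides. The bound at the initial time comes from a Lipschitz bound in time. As
`k(r) → 0`, it follows that `u(r) ≤ u(t) + η (t - r)` for `r` large, i.e. `α_η⁺(r) = 1`.

Under (A8)⁻, letting `μ → ∞` at a point where `H(x, p) < 0` contradicts coercivity. Thus `H ≥ 0`,
and comparison with a frozen profile gives `u(t) ≤ u(s) + η (t - s)`, i.e. `α_η⁻(s) = 1`.
-/

noncomputable section

section Calculus

variable {n : ℕ}

theorem hasGradientAt_const_add_mul_norm_sub_sq (a c₁ c₂ : ℝ) (x y z : En n) :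
    HasGradientAt (fun x' : En n => a + c₁ * ‖x' - y‖ ^ 2 + c₂ * ‖x' - z‖ ^ 2)
      ((2 * c₁) • (x - y) + (2 * c₂) • (x - z)) x := by
  have hasFDerivAt_norm_sub_sq (w : En n) :
      HasFDerivAt (fun x' : En n => ‖x' - w‖ ^ 2) (2 • innerSL ℝ (x - w)) x := by
    simpa using (hasFDerivAt_sub_const w).norm_sq
  rw [hasGradientAt_iff_hasFDerivAt]
  refine ((((hasFDerivAt_norm_sub_sq y).const_mul c₁).const_add a).add
    ((hasFDerivAt_norm_sub_sq z).const_mul c₂)).congr_fderiv ?_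
  ext w
  simp only [add_apply, smul_apply, innerSL_apply_apply,
    InnerProductSpace.toDual_apply_apply, inner_add_left, real_inner_smul_left, smul_eq_mul,
    nsmul_eq_mul]
  push_cast
  ring

theorem fderiv_apply_zero_one_eq {φ : En n × ℝ → ℝ} (hφ : ContDiff ℝ 1 φ) {x : En n} {t d : ℝ}
    (hd : HasDerivAt (fun s => φ (x, s)) d t) : fderiv ℝ φ (x, t) (0, 1) = d := by
  have hpath : HasDerivAt (fun s : ℝ => ((x, s) : En n × ℝ)) (0, 1) t :=
    (hasDerivAt_const t x).prodMk (hasDerivAt_id t)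
  exact ((hφ.differentiable one_ne_zero (x, t)).hasFDerivAt.comp_hasDerivAt t hpath).unique hd

variable {H : En n → En n → ℝ} {u uo : En n × ℝ → ℝ} {φ : En n × ℝ → ℝ} {x p : En n} {t d : ℝ}

theorem EvolSubIneq.le_zero_of_isLocalMax (h : EvolSubIneq H u uo) (hφ : ContDiff ℝ 1 φ)
    (ht : 0 < t) (hmax : IsLocalMax (fun q => u q - φ q) (x, t))
    (hd : HasDerivAt (fun s => φ (x, s)) d t) (hp : HasGradientAt (fun y => φ (y, t)) p x) :
    d + H x p + u (x, t) - uo (x, t) ≤ 0 := by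
  simpa only [fderiv_apply_zero_one_eq hφ hd, hp.gradient] using h φ hφ x t ht hmax

theorem EvolSuperIneq.zero_le_of_isLocalMin (h : EvolSuperIneq H u uo) (hφ : ContDiff ℝ 1 φ)
    (ht : 0 < t) (hmin : IsLocalMin (fun q => u q - φ q) (x, t))
    (hd : HasDerivAt (fun s => φ (x, s)) d t) (hp : HasGradientAt (fun y => φ (y, t)) p x) :
    0 ≤ d + H x p + u (x, t) - uo (x, t) := by
  simpa only [fderiv_apply_zero_one_eq hφ hd, hp.gradient] using h φ hφ x t ht hmin

theorem EvolSubIneq.le_zero_of_isLocalMax_mul (h : EvolSubIneq H u uo) {m g : ℝ → ℝ}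
    (hm : ContDiff ℝ 1 m) (hm_pos : ∀ s, 0 < m s) (hg : ContDiff ℝ 1 g) (ht : 0 < t) {y : En n}
    {M : ℝ} (hmax : IsLocalMax (fun q => m q.2 * u q - g q.2 - M * ‖q.1 - y‖ ^ 2) (x, t)) :
    (deriv g t - deriv m t * u (x, t)) / m t + H x ((2 * (M / m t)) • (x - y))
      + u (x, t) - uo (x, t) ≤ 0 := by
  have hm_ne (s : ℝ) : m s ≠ 0 := (hm_pos s).ne'
  set k := m t * u (x, t) - g t - M * ‖x - y‖ ^ 2
  set φ : En n × ℝ → ℝ := fun q => (g q.2 + k + M * ‖q.1 - y‖ ^ 2) / m q.2 with hφ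
  have hφc : ContDiff ℝ 1 φ := by
    have hsq : ContDiff ℝ 1 fun q : En n × ℝ => ‖q.1 - y‖ ^ 2 :=
      (contDiff_fst.sub contDiff_const).norm_sq ℝ
    exact (((hg.comp contDiff_snd).add contDiff_const).add (contDiff_const.mul hsq)).div
      (hm.comp contDiff_snd) fun q => hm_ne q.2
  have hcontact : g t + k + M * ‖x - y‖ ^ 2 = m t * u (x, t) := by ring
  have hmax' : IsLocalMax (fun q => u q - φ q) (x, t) := by
    filter_upwards [hmax] with q hq
    have hle : u q ≤ φ q := by
      rw [le_div_iff₀ (hm_pos q.2)]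
      linarith
    have heq : φ (x, t) = u (x, t) := by
      simp only [hφ, hcontact]
      exact mul_div_cancel_left₀ _ (hm_ne t)
    linarith
  have hd : HasDerivAt (fun s => φ (x, s)) ((deriv g t - deriv m t * u (x, t)) / m t) t := by
    have hmd := (hm.differentiable one_ne_zero t).hasDerivAt
    have hgd := (hg.differentiable one_ne_zero t).hasDerivAt
    refine (((hgd.add_const k).add_const (M * ‖x - y‖ ^ 2)).div hmd (hm_ne t)).congr_deriv ?_
    rw [hcontact]
    field_simp [hm_ne t]
  have hp : HasGradientAt (fun x' => φ (x', t)) ((2 * (M / m t)) • (x - y)) x := by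
    convert hasGradientAt_const_add_mul_norm_sub_sq ((g t + k) / m t) (M / m t) 0 x y y using 1
    · ext x'
      simp only [hφ]
      ring
    · simp
  exact h.le_zero_of_isLocalMax hφc ht hmax' hd hp

variable {f : ℝ → ℝ → ℝ}

theorem contDiff_left_of_uncurry (hf : ContDiff ℝ 1 (Function.uncurry f)) (r : ℝ) :
    ContDiff ℝ 1 fun t => f t r :=
  hf.comp (contDiff_id.prodMk contDiff_const)

theorem contDiff_right_of_uncurry (hf : ContDiff ℝ 1 (Function.uncurry f)) (t : ℝ) :
    ContDiff ℝ 1 (f t) :=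
  hf.comp (contDiff_const.prodMk contDiff_id)

theorem continuous_deriv_left (hf : ContDiff ℝ 1 (Function.uncurry f)) :
    Continuous fun q : ℝ × ℝ => deriv (fun t => f t q.2) q.1 := by
  have hderiv (q : ℝ × ℝ) :
      deriv (fun t => f t q.2) q.1 = fderiv ℝ (Function.uncurry f) q (1, 0) :=
    (HasFDerivAt.comp_hasDerivAt (f := fun t => (t, q.2)) q.1
      (hf.differentiable one_ne_zero q).hasFDerivAt
      ((hasDerivAt_id q.1).prodMk (hasDerivAt_const q.1 q.2))).deriv
  simpa only [hderiv] using (hf.continuous_fderiv one_ne_zero).clm_apply continuous_const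

theorem continuous_deriv_right (hf : ContDiff ℝ 1 (Function.uncurry f)) :
    Continuous fun q : ℝ × ℝ => deriv (f q.1) q.2 := by
  have hderiv (q : ℝ × ℝ) :
      deriv (f q.1) q.2 = fderiv ℝ (Function.uncurry f) q (0, 1) :=
    (HasFDerivAt.comp_hasDerivAt (f := fun r => (q.1, r)) q.2
      (hf.differentiable one_ne_zero q).hasFDerivAt
      ((hasDerivAt_const q.2 q.1).prodMk (hasDerivAt_id q.2))).deriv
  simpa only [hderiv] using (hf.continuous_fderiv one_ne_zero).clm_apply continuous_const

end Calculus

section Compactness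

theorem exists_tendsto_hyperfilter {X : Type*} [TopologicalSpace X] {K : Set X} (hK : IsCompact K)
    {z : ℕ → X} (hz : ∀ᶠ N in (hyperfilter ℕ : Filter ℕ), z N ∈ K) :
    ∃ a ∈ K, Tendsto z (hyperfilter ℕ) (𝓝 a) :=
  hK.ultrafilter_le_nhds' ((hyperfilter ℕ).map z) hz

theorem isMinOn_zeros_of_penalized {X : Type*} [TopologicalSpace X] {K : Set X} {f g : X → ℝ}
    (hf : ContinuousOn f K) (hg : ContinuousOn g K) (hg_nonneg : ∀ p ∈ K, 0 ≤ g p)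
    (hzero : ∃ b ∈ K, g b = 0) {z : ℕ → X} (hzK : ∀ N, z N ∈ K)
    (hz : ∀ N : ℕ, IsMinOn (fun p => f p + N * g p) K (z N))
    {a : X} (ha : a ∈ K) {l : Filter ℕ} [l.NeBot] (hl : l ≤ atTop) (hza : Tendsto z l (𝓝 a)) :
    g a = 0 ∧ ∀ p ∈ K, g p = 0 → f a ≤ f p := by
  have hzaK : Tendsto z l (𝓝[K] a) := tendsto_nhdsWithin_iff.2 ⟨hza, .of_forall hzK⟩
  have hfz := (hf a ha).tendsto.comp hzaK
  have hgz := (hg a ha).tendsto.comp hzaK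
  have hpen {b : X} (hb : b ∈ K) (hgb : g b = 0) (N : ℕ) : f (z N) + N * g (z N) ≤ f b := by
    simpa [hgb] using hz N hb
  refine ⟨?_, fun p hp hgp => ?_⟩
  · obtain ⟨b, hb, hgb⟩ := hzero
    have hquot : Tendsto (fun N : ℕ => (f b - f (z N)) / N) l (𝓝 0) :=
      (hfz.const_sub (f b)).div_atTop (tendsto_natCast_atTop_atTop.mono_left hl)
    refine le_antisymm (le_of_tendsto_of_tendsto hgz hquot ?_) (hg_nonneg a ha)
    filter_upwards [hl (eventually_gt_atTop 0)] with N hN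
    rw [Function.comp_apply, le_div_iff₀ (Nat.cast_pos.2 hN)]
    linarith [hpen hb hgb N]
  · refine le_of_tendsto hfz (.of_forall fun N => ?_)
    have := mul_nonneg N.cast_nonneg (hg_nonneg _ (hzK N))
    exact (le_add_of_nonneg_right this).trans (hpen hp hgp N)

theorem le_of_forall_pos_le_add_mul {a b c : ℝ} (h : ∀ ε > 0, a ≤ b + ε * c) : a ≤ b := by
  have hlim : Tendsto (fun ε : ℝ => b + ε * c) (𝓝[>] 0) (𝓝 b) := by
    have : Continuous fun ε : ℝ => b + ε * c := by fun_prop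
    simpa using (this.tendsto 0).mono_left nhdsWithin_le_nhds
  exact ge_of_tendsto hlim (eventually_mem_nhdsWithin.mono h)

end Compactness

section Torus

variable {n : ℕ}

/-- The closed unit cube of `ℝ^n`, a compact set containing a representative of every point of
the torus. -/
def unitCube (n : ℕ) : Set (En n) := {x | ∀ i, x i ∈ Icc (0 : ℝ) 1}

theorem isCompact_unitCube (n : ℕ) : IsCompact (unitCube n) := by
  convert (isCompact_univ_pi fun _ : Fin n => isCompact_Icc (a := (0 : ℝ)) (b := 1)).image
    (PiLp.continuous_toLp 2 fun _ : Fin n => ℝ) using 1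
  ext x
  exact ⟨fun hx => ⟨WithLp.ofLp x, fun i _ => hx i, rfl⟩,
    fun ⟨_, hy, hyx⟩ i => hyx ▸ hy i (mem_univ i)⟩

theorem exists_add_intVec_mem_unitCube (x : En n) : ∃ k, x + intVec n k ∈ unitCube n := by
  refine ⟨fun i => -⌊x i⌋, fun i => ?_⟩
  have hfract : (x + intVec n fun i => -⌊x i⌋) i = Int.fract (x i) := by
    simp only [intVec, PiLp.add_apply, Int.cast_neg, Int.fract, sub_eq_add_neg]
  rw [hfract]
  exact ⟨Int.fract_nonneg _, (Int.fract_lt_one _).le⟩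

theorem unitCube_nonempty (n : ℕ) : (unitCube n).Nonempty :=
  let ⟨_, hk⟩ := exists_add_intVec_mem_unitCube (0 : En n)
  ⟨_, hk⟩

variable {H : En n → En n → ℝ}

theorem Coercive.exists_norm_le (hH : Coercive H) (M : ℝ) :
    ∃ ρ, ∀ x p, H x p ≤ M → ‖p‖ ≤ ρ := by
  obtain ⟨ρ, hρ⟩ := hH (M + 1)
  refine ⟨ρ, fun x p hp => le_of_not_ge fun hge => ?_⟩
  linarith [hρ x p hge]

theorem ZPeriodicH.exists_forall_le (hper : ZPeriodicH H)
    (hH : Continuous fun q : En n × En n => H q.1 q.2) (L : ℝ) :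
    ∃ K, ∀ x p, ‖p‖ ≤ L → H x p ≤ K := by
  obtain ⟨K, hK⟩ := (((isCompact_unitCube n).prod (isCompact_closedBall (0 : En n) L)).image
    hH).bddAbove
  refine ⟨K, fun x p hp => ?_⟩
  obtain ⟨k, hk⟩ := exists_add_intVec_mem_unitCube x
  rw [← hper x k p]
  exact hK ⟨(x + intVec n k, p), ⟨hk, mem_closedBall_zero_iff.2 hp⟩, rfl⟩

end Torus

section Doubling

/-- Standing assumptions on a Hamiltonian on the torus. -/
structure IsTorusHamiltonian {n : ℕ} (H : En n → En n → ℝ) : Prop where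
  continuous : Continuous fun q : En n × En n => H q.1 q.2
  periodic : ZPeriodicH H
  coercive : Coercive H

/-- A continuous function on `𝕋^n × [0,∞)`, with arbitrary values at negative times. -/
structure IsTorusEvolution {n : ℕ} (u : En n × ℝ → ℝ) : Prop where
  continuousOn : ContinuousOn u {q | 0 ≤ q.2}
  periodic : ZPeriodicST u

theorem IsTorusEvolution.continuousAt {n : ℕ} {u : En n × ℝ → ℝ} (hu : IsTorusEvolution u)
    (x : En n) {t : ℝ} (ht : 0 < t) : ContinuousAt u (x, t) :=
  hu.continuousOn.continuousAt
    (mem_of_superset (prod_mem_nhds univ_mem (Ici_mem_nhds ht)) fun _ hq => hq.2)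

/-- A supersolution `U` of `∂ₜ U + H(x, DU) + U - Uo = 0` and a subsolution `W` of
`∂ₜ W + H(x, DW) + W - Wo = 0`, the objects of a comparison argument on the torus. -/
structure ComparablePair {n : ℕ} (H : En n → En n → ℝ) (U Uo W Wo : En n × ℝ → ℝ) : Prop where
  hamiltonian : IsTorusHamiltonian H
  evolution_U : IsTorusEvolution U
  evolution_Uo : IsTorusEvolution Uo
  evolution_W : IsTorusEvolution W
  evolution_Wo : IsTorusEvolution Wo
  super : EvolSuperIneq H U Uo
  sub : EvolSubIneq H W Wo

/-- Data of the doubling of variables: a comparable pair `U`, `W` and a stationary subsolution `v`.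
The function `U` is compared with the convex combination `μ W + (1 - μ) v`, whose weight `μ` depends
on the times `t` of `U` and `r` of `W`; `Θ` is a penalization in these times. -/
structure DoublingProblem (n : ℕ) where
  H : En n → En n → ℝ
  (U Uo W Wo : En n × ℝ → ℝ)
  v : En n → ℝ
  c : ℝ
  (μ Θ : ℝ → ℝ → ℝ)
  pair : ComparablePair H U Uo W Wo
  singleSub : SingleSub H v c
  continuous_v : Continuous v
  periodic_v : ZPeriodic v
  contDiff_μ : ContDiff ℝ 1 (Function.uncurry μ)
  contDiff_Θ : ContDiff ℝ 1 (Function.uncurry Θ)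
  μ_pos : ∀ t r, 0 < μ t r

namespace DoublingProblem

variable {n : ℕ} (D : DoublingProblem n)

/-- The gap `U - μ W - (1 - μ) v + Θ` with the three functions evaluated at unrelated points. -/
def separatedGap (x y z : En n) (t r : ℝ) : ℝ :=
  D.U (x, t) - D.μ t r * D.W (y, r) - (1 - D.μ t r) * D.v z + D.Θ t r

/-- The gap `U - μ W - (1 - μ) v + Θ` on the spatial diagonal. -/
def gap (x : En n) (t r : ℝ) : ℝ := D.separatedGap x x x t r

/-- The quadratic penalization of the spatial separation. -/
def separation (x y z : En n) : ℝ := ‖y - x‖ ^ 2 + ‖z - x‖ ^ 2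

/-- The gap penalized by `M` times the spatial separation, as a function of all variables. -/
def penalizedGap (M : ℝ) : En n × En n × En n × ℝ × ℝ → ℝ := fun (x, y, z, t, r) =>
  D.separatedGap x y z t r + M * separation x y z

/-- The value which the supersolution property of `U` forces `H(x, DU)` to reach. -/
def superLevel (x y z : En n) (t r : ℝ) : ℝ :=
  deriv (fun t => D.Θ t r) t - deriv (fun t => D.μ t r) t * (D.W (y, r) - D.v z)
    - (D.U (x, t) - D.Uo (x, t))

/-- The value which the subsolution property of `W` forbids `H(y, DW)` to exceed. -/
def subLevel (y z : En n) (t r : ℝ) : ℝ :=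
  (deriv (D.μ t) r * (D.W (y, r) - D.v z) - deriv (D.Θ t) r) / D.μ t r
    - (D.W (y, r) - D.Wo (y, r))

/-- The viscosity inequalities for `v`, `U` and `W` at a minimum of the penalized gap, where `R`
and `Q` play the roles of `Dv(z)` and `DW(y,r)`, hence `μ Q + (1 - μ) R` that of `DU(x,t)`. -/
structure Contact (x y z : En n) (t r : ℝ) (Q R : En n) : Prop where
  singleSub : D.μ t r < 1 → D.H z R ≤ D.c
  super : D.superLevel x y z t r ≤ D.H x (D.μ t r • Q + (1 - D.μ t r) • R)
  sub : D.H y Q ≤ D.subLevel y z t r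

variable {D} {M : ℝ} {x y z : En n} {t r : ℝ}

theorem singleSub_of_isLocalMin (hmin : IsLocalMin (D.penalizedGap M) (x, y, z, t, r))
    (hμ : D.μ t r < 1) : D.H z ((2 * (M / (1 - D.μ t r))) • (z - x)) ≤ D.c := by
  have hμ' : 0 < 1 - D.μ t r := sub_pos.2 hμ
  set φ : En n → ℝ := fun z' =>
    0 + M / (1 - D.μ t r) * ‖z' - x‖ ^ 2 + 0 * ‖z' - x‖ ^ 2 with hφ
  have hφc : ContDiff ℝ 1 φ := by
    have : ContDiff ℝ 1 fun z' : En n => ‖z' - x‖ ^ 2 := (contDiff_id.sub contDiff_const).norm_sq ℝ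
    fun_prop
  have hmax : IsLocalMax (fun z' => D.v z' - φ z') z := by
    have hcurve : Continuous fun z' : En n => (x, y, z', t, r) := by fun_prop
    filter_upwards [hmin.comp_continuous (g := fun z' => (x, y, z', t, r)) hcurve.continuousAt]
      with z' hz'
    simp only [Function.comp_apply, penalizedGap, separatedGap, separation] at hz'
    refine le_of_mul_le_mul_left ?_ hμ'
    have expand (z' : En n) : (1 - D.μ t r) * (D.v z' - φ z')
        = (1 - D.μ t r) * D.v z' - M * ‖z' - x‖ ^ 2 := by
      simp only [hφ]
      field_simp
      ring
    rw [expand, expand]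
    linarith
  have hgrad := (hasGradientAt_const_add_mul_norm_sub_sq 0 (M / (1 - D.μ t r)) 0 z x x).gradient
  simpa only [hφ, hgrad, mul_zero, zero_smul, add_zero] using D.singleSub φ hφc z hmax

theorem eq_of_isLocalMin (hM : 0 < M) (hmin : IsLocalMin (D.penalizedGap M) (x, y, z, t, r))
    (hμ : D.μ t r = 1) : z = x := by
  have hcurve : Continuous fun z' : En n => (x, y, z', t, r) := by fun_prop
  have hmin' : IsLocalMin (fun z' : En n =>
      D.separatedGap x y x t r + M * ‖y - x‖ ^ 2 + M * ‖z' - x‖ ^ 2 + 0 * ‖z' - x‖ ^ 2) z := by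
    refine (hmin.comp_continuous (g := fun z' => (x, y, z', t, r)) hcurve.continuousAt).congr
      (.of_forall fun z' => ?_)
    simp only [Function.comp_apply, penalizedGap, separatedGap, separation, hμ]
    ring
  have hgrad := hasGradientAt_const_add_mul_norm_sub_sq
    (D.separatedGap x y x t r + M * ‖y - x‖ ^ 2) M 0 z x x
  have hzero := (map_eq_zero_iff _ (InnerProductSpace.toDual ℝ (En n)).injective).1
    (hmin'.hasFDerivAt_eq_zero hgrad.hasFDerivAt)
  simpa [hM.ne', sub_eq_zero] using hzero

theorem super_of_isLocalMin (hmin : IsLocalMin (D.penalizedGap M) (x, y, z, t, r)) (ht : 0 < t) :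
    D.superLevel x y z t r ≤ D.H x ((2 * M) • (y - x) + (2 * M) • (z - x)) := by
  have hμ := contDiff_left_of_uncurry D.contDiff_μ r
  have hΘ := contDiff_left_of_uncurry D.contDiff_Θ r
  set g : ℝ → ℝ := fun t' => D.μ t' r * D.W (y, r) + (1 - D.μ t' r) * D.v z - D.Θ t' r with hg
  set φ : En n × ℝ → ℝ := fun q => g q.2 + (-M) * ‖q.1 - y‖ ^ 2 + (-M) * ‖q.1 - z‖ ^ 2 with hφ
  have hφc : ContDiff ℝ 1 φ := by
    have hsq (w : En n) : ContDiff ℝ 1 fun q : En n × ℝ => ‖q.1 - w‖ ^ 2 :=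
      (contDiff_fst.sub contDiff_const).norm_sq ℝ
    have hgc : ContDiff ℝ 1 g := by fun_prop
    have := hgc.comp (contDiff_snd (E := En n))
    exact (this.add (contDiff_const.mul (hsq y))).add (contDiff_const.mul (hsq z))
  have hmin' : IsLocalMin (fun q => D.U q - φ q) (x, t) := by
    have hcurve : Continuous fun q : En n × ℝ => (q.1, y, z, q.2, r) := by fun_prop
    filter_upwards [hmin.comp_continuous (g := fun q : En n × ℝ => (q.1, y, z, q.2, r))
      (b := (x, t)) hcurve.continuousAt] with ⟨x', t'⟩ hq
    simp only [Function.comp_apply, penalizedGap, separatedGap, separation] at hq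
    simp only [hφ, hg, norm_sub_rev _ y, norm_sub_rev _ z]
    linarith
  have hd : HasDerivAt (fun s => φ (x, s))
      (deriv (fun t => D.μ t r) t * (D.W (y, r) - D.v z) - deriv (fun t => D.Θ t r) t) t := by
    have hμd := (hμ.differentiable one_ne_zero t).hasDerivAt
    have hΘd := (hΘ.differentiable one_ne_zero t).hasDerivAt
    refine (((((hμd.mul_const (D.W (y, r))).add ((hμd.const_sub 1).mul_const (D.v z))).sub
      hΘd).add_const (-M * ‖x - y‖ ^ 2)).add_const (-M * ‖x - z‖ ^ 2)).congr_deriv ?_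
    ring
  have hp : HasGradientAt (fun x' => φ (x', t)) ((2 * M) • (y - x) + (2 * M) • (z - x)) x := by
    convert hasGradientAt_const_add_mul_norm_sub_sq (g t) (-M) (-M) x y z using 1
    module
  rw [superLevel]
  linarith [D.pair.super.zero_le_of_isLocalMin hφc ht hmin' hd hp]

theorem sub_of_isLocalMin (hmin : IsLocalMin (D.penalizedGap M) (x, y, z, t, r)) (hr : 0 < r) :
    D.H y ((2 * (M / D.μ t r)) • (y - x)) ≤ D.subLevel y z t r := by
  have hμ := contDiff_right_of_uncurry D.contDiff_μ t
  have hΘ := contDiff_right_of_uncurry D.contDiff_Θ t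
  have hg : ContDiff ℝ 1 fun s => D.Θ t s - (1 - D.μ t s) * D.v z := by fun_prop
  have hmax : IsLocalMax (fun q : En n × ℝ => D.μ t q.2 * D.W q
      - (D.Θ t q.2 - (1 - D.μ t q.2) * D.v z) - M * ‖q.1 - x‖ ^ 2) (y, r) := by
    have hcurve : Continuous fun q : En n × ℝ => (x, q.1, z, t, q.2) := by fun_prop
    filter_upwards [hmin.comp_continuous (g := fun q : En n × ℝ => (x, q.1, z, t, q.2))
      (b := (y, r)) hcurve.continuousAt] with ⟨y', r'⟩ hq
    simp only [Function.comp_apply, penalizedGap, separatedGap, separation] at hq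
    linarith
  have hgd : deriv (fun s => D.Θ t s - (1 - D.μ t s) * D.v z) r
      = deriv (D.Θ t) r + deriv (D.μ t) r * D.v z := by
    have hμd := (hμ.differentiable one_ne_zero r).hasDerivAt
    have hΘd := (hΘ.differentiable one_ne_zero r).hasDerivAt
    refine (hΘd.sub ((hμd.const_sub 1).mul_const (D.v z))).deriv.trans ?_
    ring
  have hle := D.pair.sub.le_zero_of_isLocalMax_mul hμ (D.μ_pos t) hg hr hmax
  rw [hgd] at hle
  have hneg : (deriv (D.μ t) r * (D.W (y, r) - D.v z) - deriv (D.Θ t) r) / D.μ t r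
      = -((deriv (D.Θ t) r + deriv (D.μ t) r * D.v z - deriv (D.μ t) r * D.W (y, r))
        / D.μ t r) := by
    ring
  rw [subLevel, hneg]
  linarith

theorem contact_of_isLocalMin (hmin : IsLocalMin (D.penalizedGap M) (x, y, z, t, r)) (hM : 0 < M)
    (ht : 0 < t) (hr : 0 < r) :
    D.Contact x y z t r ((2 * (M / D.μ t r)) • (y - x)) ((2 * (M / (1 - D.μ t r))) • (z - x)) where
  singleSub := singleSub_of_isLocalMin hmin
  super := by
    convert super_of_isLocalMin hmin ht using 3
    · rw [smul_smul, mul_left_comm, mul_div_cancel₀ _ (D.μ_pos t r).ne']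
    · by_cases hμ : D.μ t r = 1
      · simp [eq_of_isLocalMin hM hmin hμ]
      · rw [smul_smul, mul_left_comm, mul_div_cancel₀ _ (sub_ne_zero.2 (Ne.symm hμ))]
  sub := sub_of_isLocalMin hmin hr

section Limits

variable {ι : Type*} {l : Filter ι} {x' y' z' : ι → En n} {t' r' : ι → ℝ}

theorem tendsto_superLevel (ht : 0 < t) (hr : 0 < r) (hx' : Tendsto x' l (𝓝 x))
    (hy' : Tendsto y' l (𝓝 y)) (hz' : Tendsto z' l (𝓝 z)) (ht' : Tendsto t' l (𝓝 t))
    (hr' : Tendsto r' l (𝓝 r)) :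
    Tendsto (fun i => D.superLevel (x' i) (y' i) (z' i) (t' i) (r' i)) l
      (𝓝 (D.superLevel x y z t r)) := by
  have htr := ht'.prodMk_nhds hr'
  have hU := (D.pair.evolution_U.continuousAt x ht).tendsto.comp (hx'.prodMk_nhds ht')
  have hUo := (D.pair.evolution_Uo.continuousAt x ht).tendsto.comp (hx'.prodMk_nhds ht')
  have hW := (D.pair.evolution_W.continuousAt y hr).tendsto.comp (hy'.prodMk_nhds hr')
  have hv := (D.continuous_v.tendsto z).comp hz'
  have hΘ := ((continuous_deriv_left D.contDiff_Θ).tendsto (t, r)).comp htr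
  have hμ := ((continuous_deriv_left D.contDiff_μ).tendsto (t, r)).comp htr
  exact (hΘ.sub (hμ.mul (hW.sub hv))).sub (hU.sub hUo)

theorem tendsto_subLevel (hr : 0 < r) (hy' : Tendsto y' l (𝓝 y)) (hz' : Tendsto z' l (𝓝 z))
    (ht' : Tendsto t' l (𝓝 t)) (hr' : Tendsto r' l (𝓝 r)) :
    Tendsto (fun i => D.subLevel (y' i) (z' i) (t' i) (r' i)) l (𝓝 (D.subLevel y z t r)) := by
  have htr := ht'.prodMk_nhds hr'
  have hW := (D.pair.evolution_W.continuousAt y hr).tendsto.comp (hy'.prodMk_nhds hr')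
  have hWo := (D.pair.evolution_Wo.continuousAt y hr).tendsto.comp (hy'.prodMk_nhds hr')
  have hv := (D.continuous_v.tendsto z).comp hz'
  have hμ := (D.contDiff_μ.continuous.tendsto (t, r)).comp htr
  have hΘ_deriv := ((continuous_deriv_right D.contDiff_Θ).tendsto (t, r)).comp htr
  have hμ_deriv := ((continuous_deriv_right D.contDiff_μ).tendsto (t, r)).comp htr
  exact (((hμ_deriv.mul (hW.sub hv)).sub hΘ_deriv).div hμ (D.μ_pos t r).ne').sub (hW.sub hWo)

theorem contact_of_tendsto [l.NeBot] (ht : 0 < t) (hr : 0 < r) (hx' : Tendsto x' l (𝓝 x))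
    (hy' : Tendsto y' l (𝓝 y)) (hz' : Tendsto z' l (𝓝 z)) (ht' : Tendsto t' l (𝓝 t))
    (hr' : Tendsto r' l (𝓝 r)) {Q' R' : ι → En n} {Q R : En n} (hQ' : Tendsto Q' l (𝓝 Q))
    (hR' : Tendsto R' l (𝓝 R))
    (h : ∀ᶠ i in l, D.Contact (x' i) (y' i) (z' i) (t' i) (r' i) (Q' i) (R' i)) :
    D.Contact x y z t r Q R := by
  have hμ := (D.contDiff_μ.continuous.tendsto (t, r)).comp (ht'.prodMk_nhds hr')
  have tendsto_H {a b : ι → En n} {a₀ b₀ : En n} (ha : Tendsto a l (𝓝 a₀))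
      (hb : Tendsto b l (𝓝 b₀)) : Tendsto (fun i => D.H (a i) (b i)) l (𝓝 (D.H a₀ b₀)) :=
    (D.pair.hamiltonian.continuous.tendsto (a₀, b₀)).comp (ha.prodMk_nhds hb)
  refine ⟨fun hlt => ?_, ?_, ?_⟩
  · refine le_of_tendsto (tendsto_H hz' hR') ?_
    filter_upwards [h, hμ.eventually_lt_const hlt] with i hi hlti
    exact hi.singleSub hlti
  · exact le_of_tendsto_of_tendsto (tendsto_superLevel ht hr hx' hy' hz' ht' hr')
      (tendsto_H hx' ((hμ.smul hQ').add ((hμ.const_sub 1).smul hR'))) (h.mono fun i hi => hi.super)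
  · exact le_of_tendsto_of_tendsto (tendsto_H hy' hQ') (tendsto_subLevel hr hy' hz' ht' hr')
      (h.mono fun i hi => hi.sub)

theorem exists_eventually_norm_le (hr : 0 < r) (hy' : Tendsto y' l (𝓝 y))
    (hz' : Tendsto z' l (𝓝 z)) (ht' : Tendsto t' l (𝓝 t)) (hr' : Tendsto r' l (𝓝 r))
    {Q' R' : ι → En n}
    (h : ∀ᶠ i in l, D.Contact (x' i) (y' i) (z' i) (t' i) (r' i) (Q' i) (R' i))
    (hR' : ∀ᶠ i in l, D.μ (t' i) (r' i) < 1 ∨ R' i = 0) :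
    ∃ ρ, ∀ᶠ i in l, ‖Q' i‖ ≤ ρ ∧ ‖R' i‖ ≤ ρ := by
  obtain ⟨ρ₁, hρ₁⟩ := D.pair.hamiltonian.coercive.exists_norm_le (D.subLevel y z t r + 1)
  obtain ⟨ρ₂, hρ₂⟩ := D.pair.hamiltonian.coercive.exists_norm_le D.c
  refine ⟨max ρ₁ (max ρ₂ 0), ?_⟩
  filter_upwards [h, hR', (tendsto_subLevel hr hy' hz' ht' hr').eventually_lt_const
    (lt_add_one (D.subLevel y z t r))] with i hi hRi hlevel
  refine ⟨le_max_of_le_left (hρ₁ _ _ (hi.sub.trans hlevel.le)), le_max_of_le_right ?_⟩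
  rcases hRi with hlt | hzero
  · exact le_max_of_le_left (hρ₂ _ _ (hi.singleSub hlt))
  · simp [hzero]

end Limits

section Existence

variable {S : Set (ℝ × ℝ)}

/-- Configurations over which the penalized gap is minimized: periodicity allows `x` to be taken in
the unit cube, and `y`, `z` stay within distance `1` of it. -/
def configurations (S : Set (ℝ × ℝ)) : Set (En n × En n × En n × ℝ × ℝ) :=
  unitCube n ×ˢ Metric.cthickening 1 (unitCube n) ×ˢ Metric.cthickening 1 (unitCube n) ×ˢ S

theorem isCompact_configurations (hS : IsCompact S) : IsCompact (configurations (n := n) S) :=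
  have hcube := isCompact_unitCube n
  hcube.prod (hcube.cthickening.prod (hcube.cthickening.prod hS))

theorem continuousOn_separatedGap (hS : S ⊆ Ici 0 ×ˢ Ici 0) :
    ContinuousOn (fun p : En n × En n × En n × ℝ × ℝ =>
      D.separatedGap p.1 p.2.1 p.2.2.1 p.2.2.2.1 p.2.2.2.2) (configurations S) := by
  have hU : ContinuousOn (fun p : En n × En n × En n × ℝ × ℝ => D.U (p.1, p.2.2.2.1))
      (configurations S) :=
    D.pair.evolution_U.continuousOn.comp (by fun_prop) fun p hp => (hS hp.2.2.2).1
  have hW : ContinuousOn (fun p : En n × En n × En n × ℝ × ℝ => D.W (p.2.1, p.2.2.2.2))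
      (configurations S) :=
    D.pair.evolution_W.continuousOn.comp (by fun_prop) fun p hp => (hS hp.2.2.2).2
  have hv := D.continuous_v
  have hμ : Continuous fun p : En n × En n × En n × ℝ × ℝ => D.μ p.2.2.2.1 p.2.2.2.2 :=
    D.contDiff_μ.continuous.comp (by fun_prop)
  have hΘ : Continuous fun p : En n × En n × En n × ℝ × ℝ => D.Θ p.2.2.2.1 p.2.2.2.2 :=
    D.contDiff_Θ.continuous.comp (by fun_prop)
  exact ((hU.sub (hμ.continuousOn.mul hW)).sub (by fun_prop)).add hΘ.continuousOn

theorem penalizedGap_add_intVec (M : ℝ) (x y z : En n) (t r : ℝ) (k : Fin n → ℤ) :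
    D.penalizedGap M (x + intVec n k, y + intVec n k, z + intVec n k, t, r)
      = D.penalizedGap M (x, y, z, t, r) := by
  simp only [penalizedGap, separatedGap, separation, D.pair.evolution_U.periodic x k t,
    D.pair.evolution_W.periodic y k r, D.periodic_v z k, add_sub_add_right_eq_sub]

theorem isLocalMin_penalizedGap
    (hmin : IsMinOn (D.penalizedGap M) (configurations S) (x, y, z, t, r))
    (hy : dist y x < 1) (hz : dist z x < 1) (hS : S ∈ 𝓝 (t, r)) :
    IsLocalMin (D.penalizedGap M) (x, y, z, t, r) := by
  have hy_near : ∀ᶠ p : En n × En n × En n × ℝ × ℝ in 𝓝 (x, y, z, t, r), dist p.2.1 p.1 < 1 :=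
    ContinuousAt.eventually_lt (by fun_prop) continuousAt_const hy
  have hz_near : ∀ᶠ p : En n × En n × En n × ℝ × ℝ in 𝓝 (x, y, z, t, r), dist p.2.2.1 p.1 < 1 :=
    ContinuousAt.eventually_lt (by fun_prop) continuousAt_const hz
  have hS_near : ∀ᶠ p : En n × En n × En n × ℝ × ℝ in 𝓝 (x, y, z, t, r), p.2.2.2 ∈ S :=
    ContinuousAt.eventually_mem (f := fun p : En n × En n × En n × ℝ × ℝ => p.2.2.2)
      (by fun_prop) hS
  filter_upwards [hy_near, hz_near, hS_near] with ⟨x', y', z', t', r'⟩ hy' hz' hS'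
  obtain ⟨k, hk⟩ := exists_add_intVec_mem_unitCube x'
  have mem_cthickening {w : En n} (hw : dist w x' < 1) :
      w + intVec n k ∈ Metric.cthickening 1 (unitCube n) :=
    Metric.mem_cthickening_of_dist_le _ _ _ _ hk ((dist_add_right _ _ _).trans_le hw.le)
  rw [← penalizedGap_add_intVec M x' y' z' t' r' k]
  exact hmin ⟨hk, mem_cthickening hy', mem_cthickening hz', hS'⟩

theorem separation_eq_zero_iff : separation x y z = 0 ↔ y = x ∧ z = x := by
  rw [separation, add_eq_zero_iff_of_nonneg (sq_nonneg _) (sq_nonneg _)]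
  simp [sub_eq_zero]

theorem exists_contact_of_tendsto_penalized {p : ℕ → En n × En n × En n × ℝ × ℝ}
    (hp : ∀ N : ℕ, IsMinOn (D.penalizedGap N) (configurations S) (p N))
    (hp_mem : ∀ N, p N ∈ configurations S)
    (hlim : Tendsto p (hyperfilter ℕ) (𝓝 (x, x, x, t, r))) (ht : 0 < t) (hr : 0 < r)
    (hS : S ∈ 𝓝 (t, r)) (hμ : ∀ q ∈ S, D.μ q.1 q.2 ≤ 1) : ∃ Q R, D.Contact x x x t r Q R := by
  have hx' := hlim.fst_nhds
  have hy' := hlim.snd_nhds.fst_nhds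
  have hz' := hlim.snd_nhds.snd_nhds.fst_nhds
  have htr := hlim.snd_nhds.snd_nhds.snd_nhds
  set Q' : ℕ → En n := fun N =>
    (2 * (N / D.μ (p N).2.2.2.1 (p N).2.2.2.2)) • ((p N).2.1 - (p N).1)
  set R' : ℕ → En n := fun N =>
    (2 * (N / (1 - D.μ (p N).2.2.2.1 (p N).2.2.2.2))) • ((p N).2.2.1 - (p N).1) with hR'
  have hcontact : ∀ᶠ N in (hyperfilter ℕ : Filter ℕ), D.Contact (p N).1 (p N).2.1 (p N).2.2.1
      (p N).2.2.2.1 (p N).2.2.2.2 (Q' N) (R' N) := by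
    have eventually_dist_lt {w : ℕ → En n} (hw : Tendsto w (hyperfilter ℕ) (𝓝 x)) :
        ∀ᶠ N in (hyperfilter ℕ : Filter ℕ), dist (w N) (p N).1 < 1 :=
      (hw.dist hx').eventually_lt_const (by simp)
    filter_upwards [eventually_dist_lt hy', eventually_dist_lt hz',
      htr.eventually (eventually_eventually_nhds.2 hS), htr.fst_nhds.eventually_const_lt ht,
      htr.snd_nhds.eventually_const_lt hr, Nat.hyperfilter_le_atTop (eventually_gt_atTop 0)]
      with N hy hz hSN htN hrN hN
    exact contact_of_isLocalMin (isLocalMin_penalizedGap (hp N) hy hz hSN) (Nat.cast_pos.2 hN)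
      htN hrN
  have hR_zero (N : ℕ) : D.μ (p N).2.2.2.1 (p N).2.2.2.2 < 1 ∨ R' N = 0 := by
    rcases (hμ _ (hp_mem N).2.2.2).lt_or_eq with hlt | heq
    · exact .inl hlt
    · exact .inr (by simp [hR', heq])
  obtain ⟨ρ, hρ⟩ := exists_eventually_norm_le hr hy' hz' htr.fst_nhds htr.snd_nhds hcontact
    (.of_forall hR_zero)
  obtain ⟨Q, -, hQ⟩ := exists_tendsto_hyperfilter (isCompact_closedBall (0 : En n) ρ)
    (hρ.mono fun N hN => mem_closedBall_zero_iff.2 hN.1)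
  obtain ⟨R, -, hR⟩ := exists_tendsto_hyperfilter (isCompact_closedBall (0 : En n) ρ)
    (hρ.mono fun N hN => mem_closedBall_zero_iff.2 hN.2)
  exact ⟨Q, R, contact_of_tendsto ht hr hx' hy' hz' htr.fst_nhds htr.snd_nhds hQ hR hcontact⟩

theorem gap_add_intVec (x : En n) (t r : ℝ) (k : Fin n → ℤ) :
    D.gap (x + intVec n k) t r = D.gap x t r := by
  simp only [gap, separatedGap, D.pair.evolution_U.periodic x k t,
    D.pair.evolution_W.periodic x k r, D.periodic_v x k]

theorem exists_contact_of_isCompact (hS : IsCompact S) (hS_ne : S.Nonempty)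
    (hS_nonneg : S ⊆ Ici 0 ×ˢ Ici 0) (hμ : ∀ q ∈ S, D.μ q.1 q.2 ≤ 1) :
    ∃ x ∈ unitCube n, ∃ t r, (t, r) ∈ S ∧
      (∀ x', ∀ q ∈ S, D.gap x t r ≤ D.gap x' q.1 q.2) ∧
      (S ∈ 𝓝 (t, r) → ∃ Q R, D.Contact x x x t r Q R) := by
  have diag_mem {x : En n} (hx : x ∈ unitCube n) {q : ℝ × ℝ} (hq : q ∈ S) :
      (x, x, x, q.1, q.2) ∈ configurations S :=
    have := Metric.self_subset_cthickening _ hx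
    ⟨hx, this, this, hq⟩
  obtain ⟨x₀, hx₀⟩ := unitCube_nonempty n
  obtain ⟨q₀, hq₀⟩ := hS_ne
  have hgap := continuousOn_separatedGap (n := n) (D := D) hS_nonneg
  have hsep : Continuous fun p : En n × En n × En n × ℝ × ℝ => separation p.1 p.2.1 p.2.2.1 := by
    simp only [separation]
    fun_prop
  have hpen (N : ℕ) : ContinuousOn (D.penalizedGap N) (configurations S) :=
    hgap.add (hsep.continuousOn.const_mul N)
  choose p hp_mem hp using fun N : ℕ =>
    (isCompact_configurations hS).exists_isMinOn ⟨_, diag_mem hx₀ hq₀⟩ (hpen N)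
  obtain ⟨⟨x, y, z, t, r⟩, ha, hlim⟩ :=
    exists_tendsto_hyperfilter (isCompact_configurations hS) (.of_forall hp_mem)
  obtain ⟨hzero, hle⟩ := isMinOn_zeros_of_penalized hgap hsep.continuousOn
    (fun _ _ => add_nonneg (sq_nonneg _) (sq_nonneg _))
    ⟨_, diag_mem hx₀ hq₀, separation_eq_zero_iff.2 ⟨rfl, rfl⟩⟩ hp_mem hp ha
    Nat.hyperfilter_le_atTop hlim
  obtain ⟨hyx, hzx⟩ : y = x ∧ z = x := separation_eq_zero_iff.1 hzero
  subst y z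
  refine ⟨x, ha.1, t, r, ha.2.2.2, fun x' q hq => ?_, fun hnhds => ?_⟩
  · obtain ⟨k, hk⟩ := exists_add_intVec_mem_unitCube x'
    rw [← gap_add_intVec x' q.1 q.2 k]
    exact hle _ (diag_mem hk hq) (separation_eq_zero_iff.2 ⟨rfl, rfl⟩)
  · have hinterior := interior_mono hS_nonneg (mem_interior_iff_mem_nhds.2 hnhds)
    rw [interior_prod_eq, interior_Ici] at hinterior
    exact exists_contact_of_tendsto_penalized hp hp_mem hlim hinterior.1 hinterior.2 hnhds hμ

end Existence

end DoublingProblem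

end Doubling

section SameTime

variable {n : ℕ} {H : En n → En n → ℝ} {U Uo W Wo : En n × ℝ → ℝ} {θ : ℝ → ℝ} {a b : ℝ}

theorem IsTorusHamiltonian.exists_singleSub_zero (hH : IsTorusHamiltonian H) :
    ∃ c, SingleSub H 0 c := by
  obtain ⟨c, hc⟩ := hH.periodic.exists_forall_le hH.continuous 0
  refine ⟨c, fun φ _ x hmax => hc x _ ?_⟩
  have hcrit : fderiv ℝ φ x = 0 := by
    refine IsLocalMin.fderiv_eq_zero (hmax.mono fun y hy => ?_)
    simpa using hy
  simp [gradient, hcrit]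

namespace ComparablePair

/-- The doubling problem comparing `W` and `U` at the same time: the weight is `μ = 1`, and the
penalization `N (t - r)^2` forces the two times together. -/
def sameTimeDoubling (h : ComparablePair H U Uo W Wo) (hθ : ContDiff ℝ 1 θ) {c : ℝ}
    (hc : SingleSub H 0 c) (N : ℕ) : DoublingProblem n where
  H := H
  U := U
  Uo := Uo
  W := W
  Wo := Wo
  v := 0
  c := c
  μ _ _ := 1
  Θ t r := θ t + N * (t - r) ^ 2
  pair := h
  singleSub := hc
  continuous_v := continuous_const
  periodic_v _ _ := rfl
  contDiff_μ := contDiff_const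
  contDiff_Θ := by
    have := hθ.comp (contDiff_fst (F := ℝ))
    exact this.add (contDiff_const.mul ((contDiff_fst.sub contDiff_snd).pow 2))
  μ_pos _ _ := one_pos

theorem deriv_le_of_contact (h : ComparablePair H U Uo W Wo) (hθ : ContDiff ℝ 1 θ) {c : ℝ}
    (hc : SingleSub H 0 c) {N : ℕ} {x Q R : En n} {t r : ℝ}
    (hcontact : (h.sameTimeDoubling hθ hc N).Contact x x x t r Q R) :
    deriv θ t ≤ U (x, t) - Uo (x, t) - (W (x, r) - Wo (x, r)) := by
  have hΘ_left : deriv (fun t => θ t + N * (t - r) ^ 2) t = deriv θ t + 2 * N * (t - r) := by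
    refine ((hθ.differentiable one_ne_zero t).hasDerivAt.add
      ((((hasDerivAt_id t).sub_const r).pow 2).const_mul (N : ℝ))).deriv.trans ?_
    simp only [id]
    ring
  have hΘ_right : deriv (fun r => θ t + N * (t - r) ^ 2) r = -(2 * N * (t - r)) := by
    refine (((((hasDerivAt_id r).const_sub t).pow 2).const_mul (N : ℝ)).const_add
      (θ t)).deriv.trans ?_
    simp only [id]
    ring
  have hsuper := hcontact.super
  have hsub := hcontact.sub
  simp only [DoublingProblem.superLevel, DoublingProblem.subLevel, sameTimeDoubling, hΘ_left,
    hΘ_right, deriv_const, one_smul, sub_self, zero_smul, add_zero] at hsuper hsub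
  linarith

theorem sameTimeDoubling_gap (h : ComparablePair H U Uo W Wo) (hθ : ContDiff ℝ 1 θ) {c : ℝ}
    (hc : SingleSub H 0 c) (N : ℕ) (x : En n) (t r : ℝ) :
    (h.sameTimeDoubling hθ hc N).gap x t r = U (x, t) - W (x, r) + θ t + N * (t - r) ^ 2 := by
  simp only [DoublingProblem.gap, DoublingProblem.separatedGap, sameTimeDoubling, Pi.zero_apply]
  ring

theorem deriv_le_of_tendsto (h : ComparablePair H U Uo W Wo) (hθ : ContDiff ℝ 1 θ) {x : ℕ → En n}
    {t r : ℕ → ℝ} {x₀ : En n} {t₀ : ℝ} (ht₀ : 0 < t₀) {l : Filter ℕ} [l.NeBot]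
    (hx : Tendsto x l (𝓝 x₀)) (ht : Tendsto t l (𝓝 t₀)) (hr : Tendsto r l (𝓝 t₀))
    (hle : ∀ᶠ N in l, deriv θ (t N)
      ≤ U (x N, t N) - Uo (x N, t N) - (W (x N, r N) - Wo (x N, r N))) :
    deriv θ t₀ ≤ U (x₀, t₀) - Uo (x₀, t₀) - (W (x₀, t₀) - Wo (x₀, t₀)) := by
  have hU := (h.evolution_U.continuousAt x₀ ht₀).tendsto.comp (hx.prodMk_nhds ht)
  have hUo := (h.evolution_Uo.continuousAt x₀ ht₀).tendsto.comp (hx.prodMk_nhds ht)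
  have hW := (h.evolution_W.continuousAt x₀ ht₀).tendsto.comp (hx.prodMk_nhds hr)
  have hWo := (h.evolution_Wo.continuousAt x₀ ht₀).tendsto.comp (hx.prodMk_nhds hr)
  exact le_of_tendsto_of_tendsto (((hθ.continuous_deriv le_rfl).tendsto t₀).comp ht)
    ((hU.sub hUo).sub (hW.sub hWo)) hle

theorem continuousOn_gap (h : ComparablePair H U Uo W Wo) (hθ : Continuous θ) (ha : 0 ≤ a) :
    ContinuousOn (fun p : En n × ℝ × ℝ => U (p.1, p.2.1) - W (p.1, p.2.2) + θ p.2.1)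
      (unitCube n ×ˢ Icc a b ×ˢ Icc a b) := by
  have hU : ContinuousOn (fun p : En n × ℝ × ℝ => U (p.1, p.2.1))
      (unitCube n ×ˢ Icc a b ×ˢ Icc a b) :=
    h.evolution_U.continuousOn.comp (by fun_prop) fun p hp => ha.trans hp.2.1.1
  have hW : ContinuousOn (fun p : En n × ℝ × ℝ => W (p.1, p.2.2))
      (unitCube n ×ˢ Icc a b ×ˢ Icc a b) :=
    h.evolution_W.continuousOn.comp (by fun_prop) fun p hp => ha.trans hp.2.2.1
  exact (hU.sub hW).add (by fun_prop)

theorem exists_isMinOn_deriv_le (h : ComparablePair H U Uo W Wo) (hθ : ContDiff ℝ 1 θ)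
    (ha : 0 ≤ a) (hab : a ≤ b) :
    ∃ x, ∃ t ∈ Icc a b,
      (∀ x', ∀ t' ∈ Icc a b, U (x, t) - W (x, t) + θ t ≤ U (x', t') - W (x', t') + θ t') ∧
      (t ∈ Ioo a b → deriv θ t ≤ U (x, t) - Uo (x, t) - (W (x, t) - Wo (x, t))) := by
  obtain ⟨c, hc⟩ := h.hamiltonian.exists_singleSub_zero
  have hS : IsCompact (Icc a b ×ˢ Icc a b) := isCompact_Icc.prod isCompact_Icc
  have hS_nonneg : Icc a b ×ˢ Icc a b ⊆ Ici 0 ×ˢ Ici 0 :=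
    prod_mono (fun _ ht => ha.trans ht.1) fun _ ht => ha.trans ht.1
  have hab_mem : a ∈ Icc a b := left_mem_Icc.2 hab
  choose x hx t r htr hmin hcontact using fun N =>
    DoublingProblem.exists_contact_of_isCompact (D := h.sameTimeDoubling hθ hc N) hS
      ⟨(a, a), hab_mem, hab_mem⟩ hS_nonneg fun _ _ => le_rfl
  simp only [sameTimeDoubling_gap] at hmin
  have hK := (isCompact_unitCube n).prod hS
  obtain ⟨⟨x₀, t₀, r₀⟩, h₀, hlim⟩ := exists_tendsto_hyperfilter hK
    (z := fun N => (x N, t N, r N)) (.of_forall fun N => ⟨hx N, htr N⟩)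
  obtain ⟨hzero, hle⟩ := isMinOn_zeros_of_penalized
    (f := fun p : En n × ℝ × ℝ => U (p.1, p.2.1) - W (p.1, p.2.2) + θ p.2.1)
    (g := fun p : En n × ℝ × ℝ => (p.2.1 - p.2.2) ^ 2) (z := fun N => (x N, t N, r N))
    (h.continuousOn_gap hθ.continuous ha) (by fun_prop) (fun _ _ => sq_nonneg _)
    ⟨(x 0, a, a), ⟨hx 0, hab_mem, hab_mem⟩, by simp⟩ (fun N => ⟨hx N, htr N⟩)
    (fun N p hp => hmin N p.1 p.2 hp.2) h₀ Nat.hyperfilter_le_atTop hlim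
  obtain rfl : t₀ = r₀ := by simpa [sub_eq_zero] using hzero
  have htr₀ := hlim.snd_nhds
  refine ⟨x₀, t₀, h₀.2.1, fun x' t' ht' => ?_, fun ht₀ => ?_⟩
  · obtain ⟨k, hk⟩ := exists_add_intVec_mem_unitCube x'
    rw [← h.evolution_U.periodic x' k, ← h.evolution_W.periodic x' k]
    exact hle (_, t', t') ⟨hk, ht', ht'⟩ (by simp)
  · refine h.deriv_le_of_tendsto hθ (ha.trans_lt ht₀.1) hlim.fst_nhds htr₀.fst_nhds htr₀.snd_nhds ?_
    have hnhds : Icc a b ×ˢ Icc a b ∈ 𝓝 (t₀, t₀) :=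
      prod_mem_nhds (Icc_mem_nhds ht₀.1 ht₀.2) (Icc_mem_nhds ht₀.1 ht₀.2)
    filter_upwards [htr₀.eventually (eventually_eventually_nhds.2 hnhds)] with N hN
    obtain ⟨Q, R, hQR⟩ := hcontact N hN
    exact h.deriv_le_of_contact hθ hc hQR

theorem le_add_of_forall_deriv_le (h : ComparablePair H U Uo W Wo) (hθ : ContDiff ℝ 1 θ)
    (ha : 0 ≤ a) (hinit : ∀ x, W (x, a) ≤ U (x, a) + θ a)
    (hbdd : ∃ B, ∀ x, ∀ t ≥ a, -B ≤ U (x, t) - W (x, t) + θ t)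
    (hsource : ∀ x, ∀ t > a, U (x, t) + θ t < W (x, t) →
      U (x, t) - Uo (x, t) - (W (x, t) - Wo (x, t)) ≤ deriv θ t) (x : En n) {t : ℝ} (ht : a ≤ t) :
    W (x, t) ≤ U (x, t) + θ t := by
  refine le_of_forall_pos_le_add_mul (c := t - a) fun ε hε => ?_
  obtain ⟨B, hB⟩ := hbdd
  -- The growing term `ε * (t - a)` confines the minimum to `[a, b)`.
  set b := max t (a + (|B| + 1) / ε)
  have hθε : ContDiff ℝ 1 fun s => θ s + ε * (s - a) := by fun_prop
  have htb : t ≤ b := le_max_left _ _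
  obtain ⟨x₀, t₀, ht₀, hmin, hderiv⟩ := h.exists_isMinOn_deriv_le hθε ha (ht.trans htb)
  suffices hnonneg : 0 ≤ U (x₀, t₀) - W (x₀, t₀) + (θ t₀ + ε * (t₀ - a)) by
    linarith [hmin x t ⟨ht, htb⟩]
  by_contra! hneg
  have hε_nonneg : 0 ≤ ε * (t₀ - a) := mul_nonneg hε.le (sub_nonneg.2 ht₀.1)
  have hat : a < t₀ := by
    refine ht₀.1.lt_of_ne fun hat => ?_
    subst hat
    linarith [hinit x₀]
  have htb₀ : t₀ < b := by
    refine ht₀.2.lt_of_ne fun htb₀ => ?_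
    have hlarge : |B| + 1 ≤ ε * (t₀ - a) := by
      rw [← div_le_iff₀' hε]
      linarith [le_max_right t (a + (|B| + 1) / ε)]
    linarith [hB x₀ t₀ hat.le, le_abs_self B]
  have hderiv_eq : deriv (fun s => θ s + ε * (s - a)) t₀ = deriv θ t₀ + ε := by
    refine ((hθ.differentiable one_ne_zero t₀).hasDerivAt.add
      (((hasDerivAt_id t₀).sub_const a).const_mul ε)).deriv.trans ?_
    ring
  have := hderiv ⟨hat, htb₀⟩
  linarith [hsource x₀ t₀ hat (by linarith)]

end ComparablePair

end SameTime

section Stationary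

variable {n : ℕ} {H : En n → En n → ℝ} {g : En n → ℝ} {c : ℝ}

theorem norm_le_of_eventually_sub_le {φ : En n → ℝ} {p x : En n} {L : ℝ} (hL : 0 ≤ L)
    (hφ : HasGradientAt φ p x) (h : ∀ᶠ y in 𝓝 x, φ x - L * ‖y - x‖ ≤ φ y) : ‖p‖ ≤ L := by
  rcases eq_or_ne p 0 with rfl | hp
  · simpa using hL
  have hray : HasDerivAt (fun s : ℝ => x + s • (-p)) (-p) 0 := by
    simpa using ((hasDerivAt_id (0 : ℝ)).smul_const (-p)).const_add x
  have hφ_ray :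
      HasDerivAt (fun s : ℝ => φ (x + s • (-p)) + L * ‖p‖ * s) (-‖p‖ ^ 2 + L * ‖p‖) 0 := by
    have hφ' : HasFDerivAt φ (InnerProductSpace.toDual ℝ (En n) p) (x + (0 : ℝ) • (-p)) := by
      simpa using hφ.hasFDerivAt
    refine ((hφ'.comp_hasDerivAt 0 hray).add ((hasDerivAt_id (0 : ℝ)).const_mul
      (L * ‖p‖))).congr_deriv ?_
    simp
  have hmin : IsLocalMinOn (fun s : ℝ => φ (x + s • (-p)) + L * ‖p‖ * s) (Ici 0) 0 := by
    have hlim : Tendsto (fun s : ℝ => x + s • (-p)) (𝓝 0) (𝓝 x) := by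
      simpa using hray.continuousAt.tendsto
    filter_upwards [nhdsWithin_le_nhds (hlim.eventually h), self_mem_nhdsWithin] with s hs hs_nonneg
    simp only [add_sub_cancel_left, norm_smul, norm_neg, Real.norm_of_nonneg hs_nonneg] at hs
    simp only [zero_smul, add_zero, mul_zero]
    linarith
  have hnonneg := hmin.hasFDerivWithinAt_nonneg hφ_ray.hasFDerivAt.hasFDerivWithinAt
    (y := 1) (mem_posTangentConeAt_of_segment_subset (by
      rw [zero_add, segment_eq_Icc zero_le_one]
      exact Icc_subset_Ici_self))
  simp only [ContinuousLinearMap.toSpanSingleton_apply, one_smul] at hnonneg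
  refine le_of_mul_le_mul_right ?_ (norm_pos_iff.2 hp)
  linarith

theorem fderiv_apply_zero_one_eq_zero {φ : En n × ℝ → ℝ} (hφ : ContDiff ℝ 1 φ) {x : En n} {t : ℝ}
    (h : IsLocalExtr (fun s => φ (x, s)) t) : fderiv ℝ φ (x, t) (0, 1) = 0 := by
  have hd : DifferentiableAt ℝ (fun s => φ (x, s)) t := by
    have := hφ.differentiable one_ne_zero
    fun_prop
  exact fderiv_apply_zero_one_eq hφ (h.deriv_eq_zero ▸ hd.hasDerivAt)

theorem IsTorusHamiltonian.exists_singleSub_of_isLip (hH : IsTorusHamiltonian H) (hg : IsLip g) :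
    ∃ c, SingleSub H g c := by
  obtain ⟨L, hL⟩ := hg
  obtain ⟨c, hc⟩ := hH.periodic.exists_forall_le hH.continuous L
  refine ⟨c, fun φ hφ x hmax => hc x _ ?_⟩
  refine norm_le_of_eventually_sub_le L.2 (hφ.differentiable one_ne_zero x).hasGradientAt ?_
  filter_upwards [hmax] with y hy
  have hLip := (le_abs_self _).trans (hL.dist_le_mul x y)
  rw [dist_comm x y, dist_eq_norm] at hLip
  linarith

theorem SingleSub.evolSubIneq (hg : SingleSub H g c) :
    EvolSubIneq H (fun q => g q.1) fun q => g q.1 + c := by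
  intro φ hφ x t _ hmax
  have htime : IsLocalMin (fun s => φ (x, s)) t := by
    filter_upwards [hmax.comp_continuous (g := fun s => (x, s)) (b := t) (by fun_prop)] with s hs
    simpa only [Function.comp_apply, sub_le_sub_iff_left] using hs
  have hspace : IsLocalMax (fun y => g y - φ (y, t)) x :=
    hmax.comp_continuous (g := fun y => (y, t)) (b := x) (by fun_prop)
  have hle := hg (fun y => φ (y, t)) (by fun_prop) x hspace
  rw [fderiv_apply_zero_one_eq_zero hφ (.inl htime)]
  linarith

theorem SingleSuper.evolSuperIneq (hg : SingleSuper H g c) :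
    EvolSuperIneq H (fun q => g q.1) fun q => g q.1 + c := by
  intro φ hφ x t _ hmin
  have htime : IsLocalMax (fun s => φ (x, s)) t := by
    filter_upwards [hmin.comp_continuous (g := fun s => (x, s)) (b := t) (by fun_prop)] with s hs
    simpa only [Function.comp_apply, sub_le_sub_iff_left] using hs
  have hspace : IsLocalMin (fun y => g y - φ (y, t)) x :=
    hmin.comp_continuous (g := fun y => (y, t)) (b := x) (by fun_prop)
  have hle := hg (fun y => φ (y, t)) (by fun_prop) x hspace
  rw [fderiv_apply_zero_one_eq_zero hφ (.inr htime)]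
  linarith

theorem isTorusEvolution_stationary (hg : Continuous g) (hg_per : ZPeriodic g) :
    IsTorusEvolution fun q : En n × ℝ => g q.1 where
  continuousOn := by fun_prop
  periodic x k _ := hg_per x k

theorem IsTorusEvolution.continuous_slice {u : En n × ℝ → ℝ} (hu : IsTorusEvolution u) {t : ℝ}
    (ht : 0 ≤ t) : Continuous fun x => u (x, t) :=
  hu.continuousOn.comp_continuous (by fun_prop) fun _ => ht

end Stationary

section CoupledSolution

/-- A solution `(u, w)` of the coupled system with equal Hamiltonians, at distance between `1` and
`C` above a stationary subsolution `v`. -/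
structure CoupledSolution {n : ℕ} (H : En n → En n → ℝ) (v : En n → ℝ) (C : ℝ)
    (u w : En n × ℝ → ℝ) : Prop where
  hamiltonian : IsTorusHamiltonian H
  continuous_v : Continuous v
  periodic_v : ZPeriodic v
  singleSub : SingleSub H v 0
  evolution_u : IsTorusEvolution u
  evolution_w : IsTorusEvolution w
  sub : SysSub H H u w
  super : SysSuper H H u w
  bounds_u : ∀ x t, 0 ≤ t → u (x, t) - v x ∈ Icc 1 C
  bounds_w : ∀ x t, 0 ≤ t → w (x, t) - v x ∈ Icc 1 C

namespace CoupledSolution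

variable {n : ℕ} {H : En n → En n → ℝ} {v : En n → ℝ} {C : ℝ} {u w : En n × ℝ → ℝ}

theorem symm (h : CoupledSolution H v C u w) : CoupledSolution H v C w u where
  hamiltonian := h.hamiltonian
  continuous_v := h.continuous_v
  periodic_v := h.periodic_v
  singleSub := h.singleSub
  evolution_u := h.evolution_w
  evolution_w := h.evolution_u
  sub := h.sub.symm
  super := h.super.symm
  bounds_u := h.bounds_w
  bounds_w := h.bounds_u

theorem one_le (h : CoupledSolution H v C u w) : 1 ≤ C :=
  (h.bounds_u 0 0 le_rfl).1.trans (h.bounds_u 0 0 le_rfl).2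

theorem sub_le (h : CoupledSolution H v C u w) (x : En n) {s t : ℝ} (hs : 0 ≤ s) (ht : 0 ≤ t) :
    u (x, s) - u (x, t) ≤ C := by
  linarith [(h.bounds_u x s hs).2, (h.bounds_u x t ht).1]

theorem sub_other_le (h : CoupledSolution H v C u w) (x : En n) {t : ℝ} (ht : 0 ≤ t) :
    u (x, t) - w (x, t) ≤ C := by
  linarith [(h.bounds_u x t ht).2, (h.bounds_w x t ht).1]

theorem comparablePair (h : CoupledSolution H v C u w) : ComparablePair H w u u w :=
  ⟨h.hamiltonian, h.evolution_w, h.evolution_u, h.evolution_u, h.evolution_w, h.super.2, h.sub.1⟩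

theorem comparablePair_self (h : CoupledSolution H v C u w) : ComparablePair H u w u w :=
  ⟨h.hamiltonian, h.evolution_u, h.evolution_w, h.evolution_u, h.evolution_w, h.super.1, h.sub.1⟩

theorem sub_other_le_exp (h : CoupledSolution H v C u w) (x : En n) {t : ℝ} (ht : 0 ≤ t) :
    u (x, t) - w (x, t) ≤ C * Real.exp (-(2 * t)) := by
  have hderiv (t : ℝ) : deriv (fun t => C * Real.exp (-(2 * t))) t
      = -2 * (C * Real.exp (-(2 * t))) := by
    refine ((((hasDerivAt_id t).const_mul 2).neg.exp).const_mul C).deriv.trans ?_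
    simp only [id, Pi.neg_apply]
    ring
  have hC := h.one_le
  refine sub_le_iff_le_add'.2 (h.comparablePair.le_add_of_forall_deriv_le (a := 0)
    (θ := fun t => C * Real.exp (-(2 * t))) (by fun_prop) le_rfl (fun x => ?_)
    ⟨C, fun x t ht => ?_⟩ (fun x t _ hlt => ?_) x ht)
  · simpa [sub_le_iff_le_add'] using sub_le_iff_le_add'.1 (h.sub_other_le x le_rfl)
  · have : 0 ≤ C * Real.exp (-(2 * t)) := by positivity
    linarith [h.sub_other_le x ht]
  · rw [hderiv]
    linarith

theorem exists_forall_ge_sub_other_le (h : CoupledSolution H v C u w) {ε : ℝ} (hε : 0 < ε) :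
    ∃ T > 0, ∀ x, ∀ t ≥ T, u (x, t) - w (x, t) ≤ ε := by
  have hlim : Tendsto (fun t : ℝ => C * Real.exp (-(2 * t))) atTop (𝓝 0) := by
    simpa using (Real.tendsto_exp_neg_atTop_nhds_zero.comp
      (tendsto_id.const_mul_atTop two_pos)).const_mul C
  obtain ⟨T, hT⟩ := eventually_atTop.1 (hlim.eventually_le_const hε)
  refine ⟨max T 1, lt_max_of_lt_right one_pos, fun x t ht => ?_⟩
  have ht_nonneg : 0 ≤ t := zero_le_one.trans ((le_max_right _ _).trans ht)
  exact (h.sub_other_le_exp x ht_nonneg).trans (hT t ((le_max_left _ _).trans ht))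

theorem exists_initial_le_add_mul (h : CoupledSolution H v C u w)
    (hu₀ : IsLip fun x => u (x, 0)) : ∃ K, ∀ x, ∀ t ≥ 0, u (x, 0) ≤ u (x, t) + K * t := by
  obtain ⟨c, hc⟩ := h.hamiltonian.exists_singleSub_of_isLip hu₀
  have hu₀c := h.evolution_u.continuous_slice le_rfl
  have hu₀_per : ZPeriodic fun x => u (x, 0) := fun x k => h.evolution_u.periodic x k 0
  have hpair : ComparablePair H u w (fun q => u (q.1, 0)) fun q => u (q.1, 0) + c :=
    ⟨h.hamiltonian, h.evolution_u, h.evolution_w, isTorusEvolution_stationary hu₀c hu₀_per,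
      isTorusEvolution_stationary (g := fun x => u (x, 0) + c) (hu₀c.add continuous_const)
        fun x k => congrArg (· + c) (hu₀_per x k), h.super.1, hc.evolSubIneq⟩
  have hderiv (t : ℝ) : deriv (fun t => max (C + c) 0 * t) t = max (C + c) 0 := by
    simp
  refine ⟨max (C + c) 0, fun x t ht => hpair.le_add_of_forall_deriv_le (a := 0)
    (θ := fun t => max (C + c) 0 * t) (by fun_prop) le_rfl (fun x => by simp)
    ⟨C, fun x t ht => ?_⟩ (fun x t ht _ => ?_) x ht⟩
  · have : 0 ≤ max (C + c) 0 * t := mul_nonneg (le_max_right _ _) ht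
    linarith [h.sub_le x le_rfl ht]
  · rw [hderiv]
    linarith [h.sub_other_le x ht.le, le_max_left (C + c) 0]

theorem le_add_mul_of_hamiltonian_nonneg (h : CoupledSolution H v C u w) (hH : ∀ x p, 0 ≤ H x p)
    {η s : ℝ} (hη : 0 ≤ η) (hs : 0 ≤ s) (hclose : ∀ x, ∀ t ≥ s, w (x, t) - u (x, t) ≤ η)
    (x : En n) {t : ℝ} (ht : s ≤ t) : u (x, t) ≤ u (x, s) + η * (t - s) := by
  have hg : SingleSuper H (fun x => u (x, s)) 0 := fun _ _ _ _ => hH _ _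
  have hgc := h.evolution_u.continuous_slice hs
  have hg_per : ZPeriodic fun x => u (x, s) := fun x k => h.evolution_u.periodic x k s
  have hpair : ComparablePair H (fun q => u (q.1, s)) (fun q => u (q.1, s) + 0) u w :=
    ⟨h.hamiltonian, isTorusEvolution_stationary hgc hg_per,
      by simpa only [add_zero] using isTorusEvolution_stationary hgc hg_per,
      h.evolution_u, h.evolution_w, hg.evolSuperIneq, h.sub.1⟩
  have hderiv (t : ℝ) : deriv (fun t => η * (t - s)) t = η := by
    simp
  refine hpair.le_add_of_forall_deriv_le (θ := fun t => η * (t - s)) (by fun_prop) hs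
    (fun x => by simp) ⟨C, fun x t ht => ?_⟩ (fun x t ht _ => ?_) x ht
  · have : 0 ≤ η * (t - s) := mul_nonneg hη (sub_nonneg.2 ht)
    linarith [h.sub_le x (hs.trans ht) hs]
  · rw [hderiv]
    linarith [hclose x t ht.le]

end CoupledSolution

end CoupledSolution

section TwoTimes

/-- The pairs of times `(t, r)` with `a ≤ r ≤ t ≤ b`. -/
def timeTriangle (a b : ℝ) : Set (ℝ × ℝ) := {q | a ≤ q.2 ∧ q.2 ≤ q.1 ∧ q.1 ≤ b}

theorem isCompact_timeTriangle (a b : ℝ) : IsCompact (timeTriangle a b) := by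
  have hbox : IsCompact (Icc a b ×ˢ Icc a b) := isCompact_Icc.prod isCompact_Icc
  refine hbox.of_isClosed_subset ?_
    fun q hq => ⟨⟨hq.1.trans hq.2.1, hq.2.2⟩, ⟨hq.1, hq.2.1.trans hq.2.2⟩⟩
  exact (isClosed_le continuous_const continuous_snd).inter
    ((isClosed_le continuous_snd continuous_fst).inter
      (isClosed_le continuous_fst continuous_const))

theorem timeTriangle_mem_nhds {a b t r : ℝ} (har : a < r) (hrt : r < t) (htb : t < b) :
    timeTriangle a b ∈ 𝓝 (t, r) := by
  have hopen : IsOpen {q : ℝ × ℝ | a < q.2 ∧ q.2 < q.1 ∧ q.1 < b} :=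
    (isOpen_lt continuous_const continuous_snd).inter
      ((isOpen_lt continuous_snd continuous_fst).inter
        (isOpen_lt continuous_fst continuous_const))
  exact mem_of_superset (hopen.mem_nhds ⟨har, hrt, htb⟩) fun q hq => ⟨hq.1.le, hq.2.1.le, hq.2.2.le⟩

/-- Admissible weights `μ` and penalizations `Θ` for comparing a function at time `t` with its
values at earlier times `r`. -/
structure TimeWeights (μ Θ : ℝ → ℝ → ℝ) : Prop where
  contDiff_μ : ContDiff ℝ 1 (Function.uncurry μ)
  contDiff_Θ : ContDiff ℝ 1 (Function.uncurry Θ)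
  μ_pos : ∀ t r, 0 < μ t r
  μ_le_one : ∀ t r, r ≤ t → μ t r ≤ 1
  μ_self : ∀ t, μ t t = 1
  Θ_nonneg : ∀ t r, r ≤ t → 0 ≤ Θ t r

/-- The requirements under which doubling the time variable proves
`μ(t,r) (u(r) - v) ≤ u(t) - v + Θ(t,r)` for `T ≤ r ≤ t`: the bound holds for `r = T`, and
the time derivatives of the weights are absorbed by the convexity defect of `H` between the
gradient `Q` of `u` and the gradient `R` of `v`. -/
structure TimeBarrier {n : ℕ} (H : En n → En n → ℝ) (v : En n → ℝ) (μ Θ : ℝ → ℝ → ℝ) (T : ℝ)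
    (u w : En n × ℝ → ℝ) : Prop where
  initial : ∀ x, ∀ t ≥ T, μ t T * (u (x, T) - v x) ≤ u (x, t) - v x + Θ t T
  interior : ∀ x Q R t r, T < r → r < t → (μ t r < 1 → H x R ≤ 0) →
    deriv (fun t => Θ t r) t - deriv (fun t => μ t r) t * (u (x, r) - v x)
      - (u (x, t) - w (x, t)) < H x (μ t r • Q + (1 - μ t r) • R) →
    (deriv (fun t => μ t r) t + deriv (μ t) r) * (u (x, r) - v x)
      + H x (μ t r • Q + (1 - μ t r) • R)
        ≤ deriv (fun t => Θ t r) t + deriv (Θ t) r + μ t r * H x Q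

theorem timeWeights_one {K : ℝ} (hK : 0 ≤ K) :
    TimeWeights (fun _ _ => 1) fun t r => K * (t - r) where
  contDiff_μ := contDiff_const
  contDiff_Θ := contDiff_const.mul (contDiff_fst.sub contDiff_snd)
  μ_pos _ _ := one_pos
  μ_le_one _ _ _ := le_rfl
  μ_self _ := rfl
  Θ_nonneg _ _ h := mul_nonneg hK (sub_nonneg.2 h)

theorem timeBarrier_one {n : ℕ} {H : En n → En n → ℝ} {v : En n → ℝ} {u w : En n × ℝ → ℝ} {K : ℝ}
    (hK : ∀ x, ∀ t ≥ 0, u (x, 0) ≤ u (x, t) + K * t) :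
    TimeBarrier H v (fun _ _ => 1) (fun t r => K * (t - r)) 0 u w where
  initial x t ht := by
    rw [sub_zero, one_mul]
    linarith [hK x t ht]
  interior x Q R t r _ _ _ _ := by
    simp

namespace CoupledSolution

variable {n : ℕ} {H : En n → En n → ℝ} {v : En n → ℝ} {C : ℝ} {u w : En n × ℝ → ℝ}
  {μ Θ : ℝ → ℝ → ℝ} {ζ T b t r : ℝ} {x : En n}

/-- The doubling problem comparing `u` at time `t` with `u` at time `r`, where `ζ t` makes the
penalization strict. -/
def doubling (h : CoupledSolution H v C u w) (hμΘ : TimeWeights μ Θ) (ζ : ℝ) :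
    DoublingProblem n where
  H := H
  U := u
  Uo := w
  W := u
  Wo := w
  v := v
  c := 0
  μ := μ
  Θ t r := Θ t r + ζ * t
  pair := h.comparablePair_self
  singleSub := h.singleSub
  continuous_v := h.continuous_v
  periodic_v := h.periodic_v
  contDiff_μ := hμΘ.contDiff_μ
  contDiff_Θ := hμΘ.contDiff_Θ.add (contDiff_const.mul contDiff_fst)
  μ_pos := hμΘ.μ_pos

theorem doubling_gap (h : CoupledSolution H v C u w) (hμΘ : TimeWeights μ Θ) (ζ : ℝ) (x : En n)
    (t r : ℝ) : (h.doubling hμΘ ζ).gap x t r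
      = u (x, t) - v x - μ t r * (u (x, r) - v x) + Θ t r + ζ * t := by
  simp only [doubling, DoublingProblem.gap, DoublingProblem.separatedGap]
  ring

theorem doubling_superLevel (h : CoupledSolution H v C u w) (hμΘ : TimeWeights μ Θ) (ζ : ℝ)
    (x : En n) (t r : ℝ) : (h.doubling hμΘ ζ).superLevel x x x t r
      = deriv (fun t => Θ t r) t - deriv (fun t => μ t r) t * (u (x, r) - v x)
        - (u (x, t) - w (x, t)) + ζ := by
  have hΘ : DifferentiableAt ℝ (fun t => Θ t r) t :=
    (contDiff_left_of_uncurry hμΘ.contDiff_Θ r).differentiable one_ne_zero t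
  have hderiv : deriv (fun t => Θ t r + ζ * t) t = deriv (fun t => Θ t r) t + ζ :=
    (hΘ.hasDerivAt.add ((hasDerivAt_id t).const_mul ζ)).deriv.trans (by rw [mul_one])
  simp only [doubling, DoublingProblem.superLevel, hderiv]
  ring

theorem doubling_subLevel (h : CoupledSolution H v C u w) (hμΘ : TimeWeights μ Θ) (ζ : ℝ)
    (x : En n) (t r : ℝ) : (h.doubling hμΘ ζ).subLevel x x t r
      = (deriv (μ t) r * (u (x, r) - v x) - deriv (Θ t) r) / μ t r - (u (x, r) - w (x, r)) := by
  simp only [doubling, DoublingProblem.subLevel, deriv_add_const']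

-- Where the gap of `u` is below that of `w`, we have `(u - w)(t) ≤ μ (u - w)(r)`, so that the
-- coupling terms of the two viscosity inequalities have a good sign.
theorem not_contact_of_gap_le (h : CoupledSolution H v C u w) (hμΘ : TimeWeights μ Θ) (hζ : 0 < ζ)
    (hu : TimeBarrier H v μ Θ T u w) (hr : T < r) (hrt : r < t)
    (hle : (h.doubling hμΘ ζ).gap x t r ≤ (h.symm.doubling hμΘ ζ).gap x t r) (Q R : En n) :
    ¬ (h.doubling hμΘ ζ).Contact x x x t r Q R := by
  intro hcontact
  have hμ := hμΘ.μ_pos t r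
  have hsuper := hcontact.super
  have hsub := hcontact.sub
  rw [doubling_superLevel] at hsuper
  rw [doubling_subLevel, le_sub_iff_add_le, le_div_iff₀ hμ] at hsub
  rw [doubling_gap, doubling_gap] at hle
  have hbarrier := hu.interior x Q R t r hr hrt hcontact.singleSub
    ((lt_add_of_pos_right _ hζ).trans_le hsuper)
  simp only [doubling] at hsuper hsub
  linarith

theorem strictly_ordered_of_gap_neg (h : CoupledSolution H v C u w) (hμΘ : TimeWeights μ Θ)
    (hζ : 0 < ζ) (hT : 0 ≤ T) (hb : C ≤ ζ * b) (hu : TimeBarrier H v μ Θ T u w)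
    (hmem : (t, r) ∈ timeTriangle T b) (hneg : (h.doubling hμΘ ζ).gap x t r < 0) :
    T < r ∧ r < t ∧ t < b := by
  obtain ⟨hTr, hrt, htb⟩ : T ≤ r ∧ r ≤ t ∧ t ≤ b := hmem
  have hr : 0 ≤ r := hT.trans hTr
  have hζt : 0 ≤ ζ * t := mul_nonneg hζ.le (hr.trans hrt)
  have hΘ := hμΘ.Θ_nonneg t r hrt
  rw [doubling_gap] at hneg
  refine ⟨hTr.lt_of_ne ?_, hrt.lt_of_ne ?_, htb.lt_of_ne ?_⟩
  · rintro rfl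
    linarith [hu.initial x t hrt]
  · rintro rfl
    rw [hμΘ.μ_self] at hneg
    linarith
  · rintro rfl
    have hμ_mul : μ t r * (u (x, r) - v x) ≤ C :=
      (mul_le_of_le_one_left (zero_le_one.trans (h.bounds_u x r hr).1)
        (hμΘ.μ_le_one t r hrt)).trans (h.bounds_u x r hr).2
    linarith [(h.bounds_u x t (hr.trans hrt)).1]

theorem doubling_gap_nonneg_of_gap_le (h : CoupledSolution H v C u w) (hμΘ : TimeWeights μ Θ)
    (hζ : 0 < ζ) (hT : 0 ≤ T) (hb : C ≤ ζ * b) (hu : TimeBarrier H v μ Θ T u w)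
    (hmem : (t, r) ∈ timeTriangle T b)
    (hle : (h.doubling hμΘ ζ).gap x t r ≤ (h.symm.doubling hμΘ ζ).gap x t r)
    (hcontact : timeTriangle T b ∈ 𝓝 (t, r) →
      ∃ Q R, (h.doubling hμΘ ζ).Contact x x x t r Q R) :
    0 ≤ (h.doubling hμΘ ζ).gap x t r := by
  by_contra! hneg
  obtain ⟨hTr, hrt, htb⟩ := h.strictly_ordered_of_gap_neg hμΘ hζ hT hb hu hmem hneg
  obtain ⟨Q, R, hQR⟩ := hcontact (timeTriangle_mem_nhds hTr hrt htb)
  exact h.not_contact_of_gap_le hμΘ hζ hu hTr hrt hle Q R hQR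

theorem doubling_gap_nonneg (h : CoupledSolution H v C u w) (hμΘ : TimeWeights μ Θ)
    (hζ : 0 < ζ) (hT : 0 ≤ T) (hb : C ≤ ζ * b) (hu : TimeBarrier H v μ Θ T u w)
    (hw : TimeBarrier H v μ Θ T w u) (hmem : (t, r) ∈ timeTriangle T b) :
    0 ≤ (h.doubling hμΘ ζ).gap x t r := by
  have hS := isCompact_timeTriangle T b
  have hS_nonneg : timeTriangle T b ⊆ Ici 0 ×ˢ Ici 0 := fun q hq =>
    ⟨hT.trans (hq.1.trans hq.2.1), hT.trans hq.1⟩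
  have hμ : ∀ q ∈ timeTriangle T b, μ q.1 q.2 ≤ 1 := fun q hq => hμΘ.μ_le_one _ _ hq.2.1
  obtain ⟨x₁, -, t₁, r₁, hmem₁, hmin₁, hcontact₁⟩ :=
    (h.doubling hμΘ ζ).exists_contact_of_isCompact hS ⟨_, hmem⟩ hS_nonneg hμ
  obtain ⟨x₂, -, t₂, r₂, hmem₂, hmin₂, hcontact₂⟩ :=
    (h.symm.doubling hμΘ ζ).exists_contact_of_isCompact hS ⟨_, hmem⟩ hS_nonneg hμ
  refine le_trans ?_ (hmin₁ x _ hmem)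
  rcases le_total ((h.doubling hμΘ ζ).gap x₁ t₁ r₁) ((h.symm.doubling hμΘ ζ).gap x₂ t₂ r₂)
    with hle | hle
  · exact h.doubling_gap_nonneg_of_gap_le hμΘ hζ hT hb hu hmem₁ (hle.trans (hmin₂ x₁ _ hmem₁))
      hcontact₁
  · exact (h.symm.doubling_gap_nonneg_of_gap_le hμΘ hζ hT hb hw hmem₂
      (hle.trans (hmin₁ x₂ _ hmem₂)) hcontact₂).trans hle

theorem mul_sub_le_of_timeBarrier (h : CoupledSolution H v C u w) (hμΘ : TimeWeights μ Θ)
    (hT : 0 ≤ T) (hu : TimeBarrier H v μ Θ T u w) (hw : TimeBarrier H v μ Θ T w u) (x : En n)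
    (hr : T ≤ r) (hrt : r ≤ t) : μ t r * (u (x, r) - v x) ≤ u (x, t) - v x + Θ t r := by
  refine le_of_forall_pos_le_add_mul (c := t) fun ζ hζ => ?_
  have hb : C ≤ ζ * max t (C / ζ) := by
    simpa only [mul_div_cancel₀ C hζ.ne'] using
      mul_le_mul_of_nonneg_left (le_max_right t (C / ζ)) hζ.le
  have hgap := h.doubling_gap_nonneg hμΘ hζ hT hb hu hw (x := x) (t := t) (r := r)
    ⟨hr, hrt, le_max_left _ _⟩
  rw [doubling_gap] at hgap
  linarith

theorem exists_le_add_mul_sub (h : CoupledSolution H v C u w) (hu₀ : IsLip fun x => u (x, 0))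
    (hw₀ : IsLip fun x => w (x, 0)) :
    ∃ K > 0, (∀ x r t, 0 ≤ r → r ≤ t → u (x, r) ≤ u (x, t) + K * (t - r)) ∧
      ∀ x r t, 0 ≤ r → r ≤ t → w (x, r) ≤ w (x, t) + K * (t - r) := by
  obtain ⟨Ku, hKu⟩ := h.exists_initial_le_add_mul hu₀
  obtain ⟨Kw, hKw⟩ := h.symm.exists_initial_le_add_mul hw₀
  set K := max (max Ku Kw) 1
  have hK_pos : 0 < K := lt_max_of_lt_right one_pos
  have hKu_le : Ku ≤ K := (le_max_left _ _).trans (le_max_left _ _)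
  have hKw_le : Kw ≤ K := (le_max_right _ _).trans (le_max_left _ _)
  have hu : TimeBarrier H v (fun _ _ => 1) (fun t r => K * (t - r)) 0 u w :=
    timeBarrier_one fun x t ht => (hKu x t ht).trans (by gcongr)
  have hw : TimeBarrier H v (fun _ _ => 1) (fun t r => K * (t - r)) 0 w u :=
    timeBarrier_one fun x t ht => (hKw x t ht).trans (by gcongr)
  refine ⟨K, hK_pos, fun x r t hr hrt => ?_, fun x r t hr hrt => ?_⟩
  · have := h.mul_sub_le_of_timeBarrier (timeWeights_one hK_pos.le) le_rfl hu hw x hr hrt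
    linarith
  · have := h.symm.mul_sub_le_of_timeBarrier (timeWeights_one hK_pos.le) le_rfl hw hu x hr hrt
    linarith

end CoupledSolution

end TwoTimes

section ExponentialWeight

/-- The exponentially decaying rate `A e^{-κ(r - T)}`. -/
def expRate (A κ T r : ℝ) : ℝ := A * Real.exp (-(κ * (r - T)))

/-- The weight `e^{-k(r)(t - r)}` with rate `k = expRate A κ T`. -/
def expWeight (A κ T t r : ℝ) : ℝ := Real.exp (-(expRate A κ T r * (t - r)))

variable {A κ T t r : ℝ}

theorem expRate_pos (hA : 0 < A) : 0 < expRate A κ T r :=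
  mul_pos hA (Real.exp_pos _)

theorem expRate_self : expRate A κ T T = A := by
  simp [expRate]

theorem hasDerivAt_expRate : HasDerivAt (expRate A κ T) (-(κ * expRate A κ T r)) r := by
  refine ((((hasDerivAt_id r).sub_const T).const_mul κ).neg.exp.const_mul A).congr_deriv ?_
  simp only [expRate, id, Pi.neg_apply]
  ring

theorem tendsto_expRate_atTop (hκ : 0 < κ) : Tendsto (expRate A κ T) atTop (𝓝 0) := by
  have hexponent : Tendsto (fun r => κ * (r - T)) atTop atTop :=
    (tendsto_atTop_add_const_right _ (-T) tendsto_id).const_mul_atTop hκ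
  exact (mul_zero A) ▸ (Real.tendsto_exp_neg_atTop_nhds_zero.comp hexponent).const_mul A

theorem mul_exp_neg_le (y : ℝ) : y * Real.exp (-y) ≤ 1 - Real.exp (-y) := by
  have hmul := mul_le_mul_of_nonneg_right (Real.add_one_le_exp y) (Real.exp_pos (-y)).le
  rw [← Real.exp_add, add_neg_cancel, Real.exp_zero] at hmul
  linarith

theorem one_sub_expWeight_le : 1 - expWeight A κ T t r ≤ expRate A κ T r * (t - r) := by
  rw [expWeight]
  linarith [Real.one_sub_le_exp_neg (expRate A κ T r * (t - r))]

theorem contDiff_expWeight : ContDiff ℝ 1 (Function.uncurry (expWeight A κ T)) := by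
  unfold Function.uncurry expWeight expRate
  fun_prop

theorem deriv_expWeight_left :
    deriv (fun t => expWeight A κ T t r) t = -expRate A κ T r * expWeight A κ T t r := by
  refine ((((hasDerivAt_id t).sub_const r).const_mul (expRate A κ T r)).neg.exp).deriv.trans ?_
  simp only [expWeight, id, Pi.neg_apply]
  ring

theorem deriv_expWeight_right : deriv (expWeight A κ T t) r
    = (expRate A κ T r + κ * (expRate A κ T r * (t - r))) * expWeight A κ T t r := by
  refine ((hasDerivAt_expRate.mul ((hasDerivAt_id r).const_sub t)).neg.exp).deriv.trans ?_
  simp only [expWeight, id, Pi.neg_apply, Pi.mul_apply]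
  ring

theorem timeWeights_exp (hA : 0 < A) {δ : ℝ} (hδ : 0 ≤ δ) :
    TimeWeights (expWeight A κ T) fun t r => δ * (t - r) where
  contDiff_μ := contDiff_expWeight
  contDiff_Θ := contDiff_const.mul (contDiff_fst.sub contDiff_snd)
  μ_pos _ _ := Real.exp_pos _
  μ_le_one t r hrt := Real.exp_le_one_iff.2
    (neg_nonpos.2 (mul_nonneg (expRate_pos hA).le (sub_nonneg.2 hrt)))
  μ_self t := by simp [expWeight]
  Θ_nonneg _ _ hrt := mul_nonneg hδ (sub_nonneg.2 hrt)

end ExponentialWeight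

section Convergence

variable {n : ℕ} {H : En n → En n → ℝ} {v : En n → ℝ} {C : ℝ} {u w : En n × ℝ → ℝ}

theorem A8plusAt.add_le_mul {δ ψ μ : ℝ} (hA8 : A8plusAt H δ ψ) {x Q R : En n} (hμ : 0 < μ)
    (hμ_le : μ ≤ 1) (hR : H x R ≤ 0) (hδ : δ ≤ H x (μ • Q + (1 - μ) • R)) :
    H x (μ • Q + (1 - μ) • R) + ψ * (1 - μ) ≤ μ * H x Q := by
  have hsplit : μ • (Q - R) + R = μ • Q + (1 - μ) • R := by module
  have hQ : μ⁻¹ • μ • (Q - R) + R = Q := by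
    rw [inv_smul_smul₀ hμ.ne', sub_add_cancel]
  simpa only [hsplit, hQ] using hA8 x (μ • (Q - R)) R (hsplit ▸ hδ) hR μ hμ hμ_le

theorem A8minus.hamiltonian_nonneg (hn : 1 ≤ n)
    (hH : Continuous fun q : En n × En n => H q.1 q.2) (hcoercive : Coercive H) {η₀ : ℝ}
    (hη₀ : 0 < η₀) (hA8 : A8minus H η₀) (x p : En n) : 0 ≤ H x p := by
  by_contra! hneg
  have hη : 0 < min η₀ (-H x p) := lt_min hη₀ (neg_pos.2 hneg)
  obtain ⟨ψ, hψ, hA8⟩ := hA8 _ hη (min_le_left _ _)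
  obtain ⟨q, hq⟩ : ∃ q, 1 ≤ H x q := by
    have : Nonempty (Fin n) := ⟨⟨0, hn⟩⟩
    obtain ⟨r, hr⟩ := hcoercive 1
    obtain ⟨q, hq⟩ := NormedSpace.exists_lt_norm ℝ (En n) r
    exact ⟨q, hr x q hq.le⟩
  have hnonpos (m : ℝ) (hm : 1 ≤ m) : H x (m⁻¹ • (p - q) + q) ≤ 0 := by
    have hle := hA8 x (p - q) q
      (by rw [sub_add_cancel]; exact le_neg_of_le_neg (min_le_right _ _))
      (zero_le_one.trans hq) m hm
    rw [sub_add_cancel] at hle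
    have hm_pos : 0 < m := one_pos.trans_le hm
    have hψ_term : 0 ≤ ψ * (m - 1) / m := div_nonneg (mul_nonneg hψ.le (sub_nonneg.2 hm)) hm_pos.le
    exact nonpos_of_mul_nonpos_right (by linarith) hm_pos
  have hlim : Tendsto (fun m : ℝ => H x (m⁻¹ • (p - q) + q)) atTop (𝓝 (H x q)) := by
    have : Tendsto (fun m : ℝ => m⁻¹ • (p - q) + q) atTop (𝓝 q) := by
      simpa using ((tendsto_inv_atTop_zero (𝕜 := ℝ)).smul_const (p - q)).add_const q
    exact (hH.tendsto (x, q)).comp (tendsto_const_nhds.prodMk_nhds this)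
  linarith [le_of_tendsto hlim (eventually_atTop.2 ⟨1, hnonpos⟩)]

theorem alphaPlus_eq_one {η s : ℝ} (hpos : ∀ x, 0 < u (x, s) - v x)
    (hle : ∀ x t, s ≤ t → u (x, s) ≤ u (x, t) + η * (t - s)) : alphaPlus u v η s = 1 := by
  refine IsLeast.csInf_eq ⟨⟨0, s, le_rfl, ?_⟩, ?_⟩
  · rw [sub_self, mul_zero, add_zero, div_self (hpos 0).ne']
  · rintro _ ⟨x, t, ht, rfl⟩
    rw [le_div_iff₀ (hpos x)]
    linarith [hle x t ht]

theorem alphaMinus_eq_one {η s : ℝ} (hpos : ∀ x, 0 < u (x, s) - v x)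
    (hle : ∀ x t, s ≤ t → u (x, t) ≤ u (x, s) + η * (t - s)) : alphaMinus u v η s = 1 := by
  refine IsGreatest.csSup_eq ⟨⟨0, s, le_rfl, ?_⟩, ?_⟩
  · rw [sub_self, mul_zero, sub_zero, div_self (hpos 0).ne']
  · rintro _ ⟨x, t, ht, rfl⟩
    rw [div_le_iff₀ (hpos x)]
    linarith [hle x t ht]

namespace CoupledSolution

variable {K δ ψ T κ t : ℝ}

theorem expWeight_mul_le (h : CoupledSolution H v C u w) (hK : 0 < K) (hT : 0 ≤ T)
    (hLip : ∀ x r t, 0 ≤ r → r ≤ t → u (x, r) ≤ u (x, t) + K * (t - r)) (x : En n) (ht : T ≤ t) :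
    expWeight (K * C) κ T t T * (u (x, T) - v x) ≤ u (x, t) - v x := by
  obtain ⟨hB_one, hB_le⟩ := h.bounds_u x T hT
  have hμ_pos : 0 < expWeight (K * C) κ T t T := Real.exp_pos _
  have hdecay : K * C * (t - T) * expWeight (K * C) κ T t T ≤ 1 - expWeight (K * C) κ T t T := by
    simpa only [expWeight, expRate_self] using mul_exp_neg_le (expRate (K * C) κ T T * (t - T))
  generalize expWeight (K * C) κ T t T = μ at *
  have hKt : 0 ≤ K * (t - T) := mul_nonneg hK.le (sub_nonneg.2 ht)
  rcases le_total (μ * C) 1 with hμC | hμC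
  · linarith [mul_le_mul_of_nonneg_left hB_le hμ_pos.le, (h.bounds_u x t (hT.trans ht)).1]
  · have hK_le : K * (t - T) ≤ 1 - μ := by
      linarith [mul_le_mul_of_nonneg_left hμC hKt]
    have hμ_le : 0 ≤ 1 - μ := hKt.trans hK_le
    linarith [mul_le_mul_of_nonneg_left hB_one hμ_le, hLip x T t hT ht]

theorem timeBarrier_exp (h : CoupledSolution H v C u w) (hK : 0 < K) (hδ : 0 ≤ δ) (hψ : 0 ≤ ψ)
    (hT : 0 ≤ T) (hA8 : A8plusAt H δ ψ) (hclose : ∀ x, ∀ t ≥ T, u (x, t) - w (x, t) ≤ δ)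
    (hLip : ∀ x r t, 0 ≤ r → r ≤ t → u (x, r) ≤ u (x, t) + K * (t - r)) :
    TimeBarrier H v (expWeight (K * C) (ψ / C) T) (fun t r => 2 * δ * (t - r)) T u w where
  initial x t ht := by
    have hΘ : 0 ≤ 2 * δ * (t - T) := mul_nonneg (mul_nonneg zero_le_two hδ) (sub_nonneg.2 ht)
    linarith [h.expWeight_mul_le (κ := ψ / C) hK hT hLip x ht]
  interior x Q R t r hTr hrt hR hlevel := by
    have hC : 0 < C := one_pos.trans_le h.one_le
    obtain ⟨hB_one, hB_le⟩ := h.bounds_u x r (hT.trans hTr.le)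
    have hk := expRate_pos (κ := ψ / C) (T := T) (r := r) (mul_pos hK hC)
    have hΘ_left : deriv (fun t => 2 * δ * (t - r)) t = 2 * δ := by simp
    have hΘ_right : deriv (fun r => 2 * δ * (t - r)) r = -(2 * δ) := by simp
    have hdecay : expRate (K * C) (ψ / C) T r * (t - r) * expWeight (K * C) (ψ / C) T t r
        ≤ 1 - expWeight (K * C) (ψ / C) T t r := mul_exp_neg_le _
    have hμ_pos : 0 < expWeight (K * C) (ψ / C) T t r := Real.exp_pos _
    have hμ_lt : expWeight (K * C) (ψ / C) T t r < 1 :=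
      Real.exp_lt_one_iff.2 (neg_lt_zero.2 (mul_pos hk (sub_pos.2 hrt)))
    rw [deriv_expWeight_left] at hlevel ⊢
    rw [deriv_expWeight_right]
    rw [hΘ_left] at hlevel ⊢
    rw [hΘ_right]
    generalize expRate (K * C) (ψ / C) T r = k at *
    generalize expWeight (K * C) (ψ / C) T t r = μ at *
    have hδ_le : δ ≤ H x (μ • Q + (1 - μ) • R) := by
      have : 0 ≤ k * μ * (u (x, r) - v x) := by positivity
      linarith [hclose x t (hTr.trans hrt).le]
    have hdefect := hA8.add_le_mul hμ_pos hμ_lt.le (hR hμ_lt) hδ_le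
    have habsorb : ψ / C * (k * (t - r) * μ) * (u (x, r) - v x) ≤ ψ * (1 - μ) :=
      calc ψ / C * (k * (t - r) * μ) * (u (x, r) - v x)
          ≤ ψ / C * (1 - μ) * C := by gcongr
        _ = ψ * (1 - μ) := by field_simp
    linarith

theorem exists_forall_ge_le_add_mul (h : CoupledSolution H v C u w) (hu₀ : IsLip fun x => u (x, 0))
    (hw₀ : IsLip fun x => w (x, 0)) (hδ : 0 < δ) (hψ : 0 < ψ) (hA8 : A8plusAt H δ ψ) :
    ∃ S > 0, ∀ x r t, S ≤ r → r ≤ t → u (x, r) ≤ u (x, t) + 4 * δ * (t - r) := by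
  have hC : 0 < C := one_pos.trans_le h.one_le
  obtain ⟨K, hK, hLip_u, hLip_w⟩ := h.exists_le_add_mul_sub hu₀ hw₀
  obtain ⟨Tu, hTu, hclose_u⟩ := h.exists_forall_ge_sub_other_le hδ
  obtain ⟨Tw, -, hclose_w⟩ := h.symm.exists_forall_ge_sub_other_le hδ
  set T := max Tu Tw
  have hT : 0 < T := lt_max_of_lt_left hTu
  have hu := h.timeBarrier_exp hK hδ.le hψ.le hT.le hA8
    (fun x t ht => hclose_u x t ((le_max_left _ _).trans ht)) hLip_u
  have hw := h.symm.timeBarrier_exp hK hδ.le hψ.le hT.le hA8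
    (fun x t ht => hclose_w x t ((le_max_right _ _).trans ht)) hLip_w
  obtain ⟨S, hS⟩ := eventually_atTop.1 ((tendsto_expRate_atTop (A := K * C) (T := T)
    (div_pos hψ hC)).eventually_le_const (show 0 < 2 * δ / C by positivity))
  refine ⟨max S T, lt_max_of_lt_right hT, fun x r t hr hrt => ?_⟩
  have hTr : T ≤ r := (le_max_right _ _).trans hr
  have hweighted := h.mul_sub_le_of_timeBarrier
    (timeWeights_exp (mul_pos hK hC) (mul_nonneg zero_le_two hδ.le)) hT.le hu hw x hTr hrt
  have hB := h.bounds_u x r (hT.le.trans hTr)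
  have hloss : (1 - expWeight (K * C) (ψ / C) T t r) * (u (x, r) - v x) ≤ 2 * δ * (t - r) :=
    calc (1 - expWeight (K * C) (ψ / C) T t r) * (u (x, r) - v x)
        ≤ (expRate (K * C) (ψ / C) T r * (t - r)) * (u (x, r) - v x) := by
          exact mul_le_mul_of_nonneg_right one_sub_expWeight_le (zero_le_one.trans hB.1)
      _ ≤ (2 * δ / C * (t - r)) * C := by
          have := sub_nonneg.2 hrt
          have := hS r ((le_max_left _ _).trans hr)
          have := hB.1
          gcongr
          exact hB.2
      _ = 2 * δ * (t - r) := by field_simp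
  linarith

theorem eventually_alphaPlus_eq_one (h : CoupledSolution H v C u w)
    (hu₀ : IsLip fun x => u (x, 0)) (hw₀ : IsLip fun x => w (x, 0)) {η₀ η : ℝ} (hη₀ : 0 < η₀)
    (hA8 : A8plus H η₀) (hη : 0 < η) : ∀ᶠ s in atTop, alphaPlus u v η s = 1 := by
  have hδ : 0 < min η₀ (η / 4) := lt_min hη₀ (by positivity)
  obtain ⟨ψ, hψ, hA8⟩ := hA8 _ hδ (min_le_left _ _)
  obtain ⟨S, hS, hmono⟩ := h.exists_forall_ge_le_add_mul hu₀ hw₀ hδ hψ hA8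
  filter_upwards [eventually_ge_atTop S] with s hs
  refine alphaPlus_eq_one (fun x => one_pos.trans_le (h.bounds_u x s (hS.le.trans hs)).1)
    fun x t ht => (hmono x s t hs ht).trans ?_
  have := sub_nonneg.2 ht
  gcongr
  linarith [min_le_right η₀ (η / 4)]

theorem eventually_alphaMinus_eq_one (h : CoupledSolution H v C u w) (hH : ∀ x p, 0 ≤ H x p)
    {η : ℝ} (hη : 0 < η) : ∀ᶠ s in atTop, alphaMinus u v η s = 1 := by
  obtain ⟨T, hT, hclose⟩ := h.symm.exists_forall_ge_sub_other_le hη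
  filter_upwards [eventually_ge_atTop T] with s hs
  have hs_nonneg : 0 ≤ s := hT.le.trans hs
  exact alphaMinus_eq_one (fun x => one_pos.trans_le (h.bounds_u x s hs_nonneg).1)
    fun x t ht => h.le_add_mul_of_hamiltonian_nonneg hH hη.le hs_nonneg
      (fun x t ht => hclose x t (hs.trans ht)) x ht

end CoupledSolution

theorem SysSolution.coupledSolution {u₀₁ u₀₂ : En n → ℝ} {u₁ u₂ : En n × ℝ → ℝ}
    (hsol : SysSolution H H u₀₁ u₀₂ u₁ u₂) (hH : IsTorusHamiltonian H) (hv : Continuous v)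
    (hv_per : ZPeriodic v) (hv_sub : SingleSub H v 0) (hu₁ : ZPeriodicST u₁) (hu₂ : ZPeriodicST u₂)
    (hnorm : ∀ (x : En n) (t : ℝ), 0 ≤ t →
      (1 ≤ u₁ (x, t) - v x ∧ u₁ (x, t) - v x ≤ C) ∧
      (1 ≤ u₂ (x, t) - v x ∧ u₂ (x, t) - v x ≤ C)) : CoupledSolution H v C u₁ u₂ where
  hamiltonian := hH
  continuous_v := hv
  periodic_v := hv_per
  singleSub := hv_sub
  evolution_u := ⟨hsol.1, hu₁⟩
  evolution_w := ⟨hsol.2.1, hu₂⟩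
  sub := hsol.2.2.1
  super := hsol.2.2.2.1
  bounds_u x t ht := (hnorm x t ht).1
  bounds_w x t ht := (hnorm x t ht).2

end Convergence

end

theorem stmt15_general {n : ℕ} (hn : 1 ≤ n) {H : En n → En n → ℝ} {v : En n → ℝ} {C : ℝ}
    {u₁ u₂ : En n × ℝ → ℝ} (h : CoupledSolution H v C u₁ u₂) (hu₁ : IsLip fun x => u₁ (x, 0))
    (hu₂ : IsLip fun x => u₂ (x, 0)) {η₀ : ℝ} (hη₀ : 0 < η₀) :
    (A8plus H η₀ → ∀ η > 0, ∃ s > 0, ∀ σ > s,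
      alphaPlus u₁ v η σ = 1 ∧ alphaPlus u₂ v η σ = 1) ∧
    (A8minus H η₀ → ∀ η > 0, ∃ s > 0, ∀ σ > s,
      alphaMinus u₁ v η σ = 1 ∧ alphaMinus u₂ v η σ = 1) := by
  have exists_pos {p : ℝ → Prop} (hp : ∀ᶠ σ in atTop, p σ) : ∃ s > 0, ∀ σ > s, p σ := by
    obtain ⟨s, hs⟩ := (hp.and (eventually_gt_atTop 0)).exists_forall_of_atTop
    exact ⟨s, (hs s le_rfl).2, fun σ hσ => (hs σ hσ.le).1⟩
  refine ⟨fun hA8 η hη => exists_pos ?_, fun hA8 η hη => exists_pos ?_⟩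
  · exact (h.eventually_alphaPlus_eq_one hu₁ hu₂ hη₀ hA8 hη).and
      (h.symm.eventually_alphaPlus_eq_one hu₂ hu₁ hη₀ hA8 hη)
  · have hH := hA8.hamiltonian_nonneg hn h.hamiltonian.continuous h.hamiltonian.coercive hη₀
    exact (h.eventually_alphaMinus_eq_one hH hη).and (h.symm.eventually_alphaMinus_eq_one hH hη)

/-- The Key Lemma (Lemma 5.3): `(α_η⁺, β_η⁺)` is a viscosity supersolution (under (A8)⁺),
and `(α_η⁻, β_η⁻)` is a viscosity subsolution (under (A8)⁻), of the respective ODE systems. -/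
theorem stmt15 (n : ℕ) (hn : 1 ≤ n) (H : En n → En n → ℝ)
    (hHcont : Continuous fun q : En n × En n => H q.1 q.2)
    (hHper : ZPeriodicH H) (hHcoer : Coercive H)
    (v : En n → ℝ) (hvlip : IsLip v) (hvper : ZPeriodic v)
    (hverg : SingleSolution H v 0)
    (u₀₁ u₀₂ : En n → ℝ) (hu₀₁ : IsLip u₀₁) (hu₀₂ : IsLip u₀₂)
    (hu₀₁per : ZPeriodic u₀₁) (hu₀₂per : ZPeriodic u₀₂)
    (u₁ u₂ : En n × ℝ → ℝ) (hu₁per : ZPeriodicST u₁) (hu₂per : ZPeriodicST u₂)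
    (hsol : SysSolution H H u₀₁ u₀₂ u₁ u₂)
    (C : ℝ)
    (hnorm : ∀ (x : En n) (t : ℝ), 0 ≤ t →
      (1 ≤ u₁ (x, t) - v x ∧ u₁ (x, t) - v x ≤ C) ∧
      (1 ≤ u₂ (x, t) - v x ∧ u₂ (x, t) - v x ≤ C))
    (η₀ : ℝ) (hη₀ : 0 < η₀) :
    (A8plus H η₀ →
      ∀ η : ℝ, 0 < η → η ≤ η₀ → ∀ ψ : ℝ, 0 < ψ → A8plusAt H η ψ →
        ∃ sη : ℝ, 0 < sη ∧
          (∀ φ : ℝ → ℝ, ContDiff ℝ 1 φ → ∀ σ : ℝ, sη < σ →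
            IsLocalMin (fun s => alphaPlus u₁ v η s - φ s) σ →
            0 ≤ max (deriv φ σ + ψ / C * (alphaPlus u₁ v η σ - 1)
                  + Fc C (alphaPlus u₁ v η σ - alphaPlus u₂ v η σ))
                (alphaPlus u₁ v η σ - 1)) ∧
          (∀ φ : ℝ → ℝ, ContDiff ℝ 1 φ → ∀ σ : ℝ, sη < σ →
            IsLocalMin (fun s => alphaPlus u₂ v η s - φ s) σ →
            0 ≤ max (deriv φ σ + ψ / C * (alphaPlus u₂ v η σ - 1)
                  + Fc C (alphaPlus u₂ v η σ - alphaPlus u₁ v η σ))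
                (alphaPlus u₂ v η σ - 1))) ∧
    (A8minus H η₀ →
      ∀ η : ℝ, 0 < η → η ≤ η₀ → ∀ ψ : ℝ, 0 < ψ → A8minusAt H η ψ →
        ∃ sη : ℝ, 0 < sη ∧
          (∀ φ : ℝ → ℝ, ContDiff ℝ 1 φ → ∀ σ : ℝ, sη < σ →
            IsLocalMax (fun s => alphaMinus u₁ v η s - φ s) σ →
            min (deriv φ σ + ψ / C * ((alphaMinus u₁ v η σ - 1) / alphaMinus u₁ v η σ)
                  + Fc C (alphaMinus u₁ v η σ - alphaMinus u₂ v η σ))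
                (alphaMinus u₁ v η σ - 1) ≤ 0) ∧
          (∀ φ : ℝ → ℝ, ContDiff ℝ 1 φ → ∀ σ : ℝ, sη < σ →
            IsLocalMax (fun s => alphaMinus u₂ v η s - φ s) σ →
            min (deriv φ σ + ψ / C * ((alphaMinus u₂ v η σ - 1) / alphaMinus u₂ v η σ)
                  + Fc C (alphaMinus u₂ v η σ - alphaMinus u₁ v η σ))
                (alphaMinus u₂ v η σ - 1) ≤ 0)) := by
  have h := hsol.coupledSolution ⟨hHcont, hHper, hHcoer⟩ hverg.1 hvper hverg.2.1 hu₁per hu₂per hnorm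
  have hgeneral := stmt15_general hn h
    (by simpa only [hsol.2.2.2.2.1] using hu₀₁) (by simpa only [hsol.2.2.2.2.2] using hu₀₂) hη₀
  refine ⟨fun hA8 η hη _ _ _ _ => ?_, fun hA8 η hη _ _ _ _ => ?_⟩
  · obtain ⟨s, hs, hone⟩ := hgeneral.1 hA8 η hη
    exact ⟨s, hs, fun _ _ σ hσ _ => le_max_of_le_right (sub_nonneg.2 (hone σ hσ).1.ge),
      fun _ _ σ hσ _ => le_max_of_le_right (sub_nonneg.2 (hone σ hσ).2.ge)⟩
  · obtain ⟨s, hs, hone⟩ := hgeneral.2 hA8 η hη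
    exact ⟨s, hs, fun _ _ σ hσ _ => min_le_of_right_le (sub_nonpos.2 (hone σ hσ).1.le),
      fun _ _ σ hσ _ => min_le_of_right_le (sub_nonpos.2 (hone σ hσ).2.le)⟩
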